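/- arXiv:1808.09108 — 2 statements merged into one kernel-verified Lean document; each statement's English description precedes it below -/
import Mathlib

section
/- (L² estimate on extended valleys) Fix 0 < η' < η and let Ṽ_i be the connected component of {ξ ∈ W_i : Φ(ξ) < H−η'} containing V_i. Let φ^ε be the normalized minimizer of I as above, with λ_{ε,i} = |V_i|^{-1}∫_{V_i} φ^ε dξ and λ_ε = λ_{ε,1} = −λ_{ε,2} ≥ 0. Then for every 1 ≤ i ≤ K, ‖φ^ε − λ_{ε,i}‖_{L²(Ṽ_i)} = o_ε(1) · λ_ε^{1/2} as ε → 0. -/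
open MeasureTheory Real Filter Topology Set

noncomputable section

/-- Euclidean space `ℝ^d`. -/
abbrev Euc (d : ℕ) := EuclideanSpace ℝ (Fin d)

/-- The Hessian matrix of `Φ` at `ξ`. -/
def hessian {d : ℕ} (Φ : Euc d → ℝ) (ξ : Euc d) : Matrix (Fin d) (Fin d) ℝ :=
  fun i j => iteratedFDeriv ℝ 2 Φ ξ ![EuclideanSpace.single i 1, EuclideanSpace.single j 1]

/-- The divergence of a vector field on `ℝ^d`. -/
def diverg {d : ℕ} (F : Euc d → Euc d) (ξ : Euc d) : ℝ :=
  ∑ j, fderiv ℝ (fun ζ => F ζ j) ξ (EuclideanSpace.single j 1)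

/-- The Laplacian of a function on `ℝ^d`. -/
def lapl {d : ℕ} (f : Euc d → ℝ) (x : Euc d) : ℝ :=
  ∑ j, iteratedFDeriv ℝ 2 f x ![EuclideanSpace.single j 1, EuclideanSpace.single j 1]

/-- The time scale `τ_ε = ε⁻¹ e^{-(H-h)/ε}`. -/
def tau (H h ε : ℝ) : ℝ := ε⁻¹ * Real.exp (-(H - h) / ε)

/-- The partition function `Z_ε = ∫ e^{-Φ/ε}`. -/
def Zpart {d : ℕ} (Φ : Euc d → ℝ) (ε : ℝ) : ℝ := ∫ ξ : Euc d, Real.exp (-Φ ξ / ε)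

/-- The Gibbs density `σ^ε = Z_ε⁻¹ e^{-Φ/ε}`. -/
def sigma {d : ℕ} (Φ : Euc d → ℝ) (ε : ℝ) (ξ : Euc d) : ℝ :=
  (Zpart Φ ε)⁻¹ * Real.exp (-Φ ξ / ε)


/-! ### Interior Poincaré inequality by chaining balls -/

lemma aux_CS {α : Type*} [MeasurableSpace α] (μ : Measure α) (u : α → ENNReal)
    (hu : AEMeasurable u μ) : (∫⁻ a, u a ∂μ) ^ 2 ≤ μ univ * ∫⁻ a, u a ^ 2 ∂μ := by
  have h := ENNReal.lintegral_mul_le_Lp_mul_Lq μ (p := 2) (q := 2)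
    Real.HolderConjugate.two_two (f := fun _ => 1) (g := u) aemeasurable_const hu
  have h2 : (∫⁻ a, u a ∂μ) ≤ (μ univ) ^ (1 / 2 : ℝ) * (∫⁻ a, u a ^ 2 ∂μ) ^ (1 / 2 : ℝ) := by
    simpa using h
  calc (∫⁻ a, u a ∂μ) ^ 2
      ≤ ((μ univ) ^ (1 / 2 : ℝ) * (∫⁻ a, u a ^ 2 ∂μ) ^ (1 / 2 : ℝ)) ^ 2 := by gcongr
    _ = _ := by
      rw [mul_pow, ← ENNReal.rpow_natCast, ← ENNReal.rpow_natCast, ← ENNReal.rpow_mul,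
        ← ENNReal.rpow_mul]
      norm_num

lemma aux_enorm_sq (r : ℝ) : ‖r‖ₑ ^ 2 = ENNReal.ofReal (r ^ 2) := by
  rw [← ofReal_norm, ← ENNReal.ofReal_pow (norm_nonneg _)]
  simp

lemma aux_meas_grad {d : ℕ} (f : Euc d → ℝ) :
    Measurable (fun z => ENNReal.ofReal (‖fderiv ℝ f z‖ ^ 2)) :=
  ((measurable_fderiv ℝ f).norm.pow_const 2).ennreal_ofReal

lemma aux_ftc {d : ℕ} (f : Euc d → ℝ) (hf : Differentiable ℝ f) (x y : Euc d) :
    ENNReal.ofReal ((f x - f y) ^ 2) ≤ ENNReal.ofReal (‖y - x‖ ^ 2) *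
      ∫⁻ t in Ioc (0:ℝ) 1, ENNReal.ofReal (‖fderiv ℝ f ((1 - t) • x + t • y)‖ ^ 2) := by
  set γ : ℝ → Euc d := fun t => (1 - t) • x + t • y with hγ
  set g : ℝ → ℝ := fun t => fderiv ℝ f (γ t) (y - x) with hg
  have hγm : Measurable γ := by fun_prop
  have hgm : Measurable g := (measurable_fderiv_apply_const ℝ f (y - x)).comp hγm
  have hder : ∀ t, HasDerivAt (fun t => f (γ t)) (g t) t := by
    intro t
    have h1 : HasDerivAt γ (y - x) t := by
      have : HasDerivAt γ ((0 - 1 : ℝ) • x + (1:ℝ) • y) t :=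
        (((hasDerivAt_const t (1:ℝ)).sub (hasDerivAt_id t)).smul_const x).add
          ((hasDerivAt_id t).smul_const y)
      convert this using 1
      module
    exact (hf (γ t)).hasFDerivAt.comp_hasDerivAt t h1
  have hkey : ‖f x - f y‖ₑ ≤ ∫⁻ t in Ioc (0:ℝ) 1, ‖g t‖ₑ := by
    by_cases htop : ∫⁻ t in Ioc (0:ℝ) 1, ‖g t‖ₑ = ⊤
    · rw [htop]; exact le_top
    · have hint : IntegrableOn g (Ioc 0 1) :=
        ⟨hgm.aestronglyMeasurable, lt_top_iff_ne_top.2 htop⟩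
      have h2 := intervalIntegral.integral_eq_sub_of_hasDerivAt (a := 0) (b := 1)
        (fun t _ => hder t) ((intervalIntegrable_iff_integrableOn_Ioc_of_le zero_le_one).2 hint)
      have h3 : f (γ 1) - f (γ 0) = f y - f x := by simp [hγ]
      rw [h3, intervalIntegral.integral_of_le zero_le_one] at h2
      rw [← enorm_neg, neg_sub, ← h2]
      exact enorm_integral_le_lintegral_enorm _
  rw [← aux_enorm_sq]
  calc ‖f x - f y‖ₑ ^ 2 ≤ (∫⁻ t in Ioc (0:ℝ) 1, ‖g t‖ₑ) ^ 2 := by gcongr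
    _ ≤ (volume.restrict (Ioc (0:ℝ) 1)) univ * ∫⁻ t in Ioc (0:ℝ) 1, ‖g t‖ₑ ^ 2 :=
        aux_CS _ _ hgm.enorm.aemeasurable
    _ = ∫⁻ t in Ioc (0:ℝ) 1, ‖g t‖ₑ ^ 2 := by simp
    _ ≤ ∫⁻ t in Ioc (0:ℝ) 1, ENNReal.ofReal (‖y - x‖ ^ 2) *
          ENNReal.ofReal (‖fderiv ℝ f (γ t)‖ ^ 2) := by
        refine lintegral_mono fun t => ?_
        dsimp only
        rw [aux_enorm_sq, ← ENNReal.ofReal_mul (by positivity)]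
        apply ENNReal.ofReal_le_ofReal
        have := (fderiv ℝ f (γ t)).le_opNorm (y - x)
        rw [← sq_abs, ← mul_pow, mul_comm ‖y - x‖]
        exact pow_le_pow_left₀ (abs_nonneg _) this 2
    _ = _ := by
        rw [lintegral_const_mul]
        exact (aux_meas_grad f).comp hγm

/-- scaling bound -/
lemma aux_scale {d : ℕ} (G : Euc d → ENNReal) (hG : Measurable G) (a : Euc d) (t : ℝ)
    (ht : 1 / 2 ≤ t) : ∫⁻ y, G (a + t • y) ≤ 2 ^ d * ∫⁻ z, G z := by
  have ht0 : t ≠ 0 := by linarith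
  have h1 : ∫⁻ y, G (a + t • y) = ∫⁻ z, G (a + z) ∂(Measure.map (fun x : Euc d => t • x) volume) := by
    have hm : Measurable (fun z => G (a + z)) := hG.comp (by fun_prop)
    have hm' : Measurable (fun x : Euc d => t • x) := by fun_prop
    rw [lintegral_map hm hm']
  rw [h1, Measure.map_addHaar_smul _ ht0, lintegral_smul_measure, lintegral_add_left_eq_self]
  rw [smul_eq_mul]
  gcongr
  have : (2:ENNReal) ^ d = ENNReal.ofReal (2 ^ d) := by
    rw [ENNReal.ofReal_pow (by norm_num)]; simp
  rw [this]
  apply ENNReal.ofReal_le_ofReal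
  have htp : 0 < t := by linarith
  rw [abs_of_nonneg (by positivity), ← inv_pow]
  simp only [finrank_euclideanSpace, Fintype.card_fin]
  gcongr
  rw [inv_le_comm₀ htp (by norm_num)]
  linarith

/-- Poincaré on a ball, double-integral form. -/
lemma aux_ball {d : ℕ} (c : Euc d) (ρ : ℝ) (f : Euc d → ℝ) (hf : Differentiable ℝ f) :
    ∫⁻ x in Metric.ball c ρ, ∫⁻ y in Metric.ball c ρ, ENNReal.ofReal ((f x - f y) ^ 2) ≤
      (ENNReal.ofReal ((2 * ρ) ^ 2) * (2 ^ d * volume (Metric.ball c ρ))) *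
        ∫⁻ z in Metric.closedBall c ρ, ENNReal.ofReal (‖fderiv ℝ f z‖ ^ 2) := by
  set B := Metric.ball c ρ with hB
  have hBm : MeasurableSet B := Metric.isOpen_ball.measurableSet
  set G : Euc d → ENNReal := B.indicator (fun z => ENNReal.ofReal (‖fderiv ℝ f z‖ ^ 2)) with hG
  have hGm : Measurable G := (aux_meas_grad f).indicator hBm
  have hGint : ∫⁻ z, G z ≤ ∫⁻ z in Metric.closedBall c ρ, ENNReal.ofReal (‖fderiv ℝ f z‖ ^ 2) := by
    rw [hG, lintegral_indicator hBm]
    exact lintegral_mono_set Metric.ball_subset_closedBall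
  have hpt : ∀ x ∈ B, ∀ y ∈ B, ENNReal.ofReal ((f x - f y) ^ 2) ≤
      ENNReal.ofReal ((2 * ρ) ^ 2) * ∫⁻ t in Ioc (0:ℝ) 1, G ((1 - t) • x + t • y) := by
    intro x hx y hy
    refine (aux_ftc f hf x y).trans ?_
    have hxy : ‖y - x‖ ≤ 2 * ρ := by
      rw [← dist_eq_norm]
      have h1 := Metric.mem_ball.1 hx
      have h2 := Metric.mem_ball.1 hy
      have := dist_triangle_right y x c
      linarith
    refine mul_le_mul' (ENNReal.ofReal_le_ofReal (pow_le_pow_left₀ (norm_nonneg _) hxy 2)) ?_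
    refine setLIntegral_mono' measurableSet_Ioc fun t ht => ?_
    have hmem : (1 - t) • x + t • y ∈ B :=
      (convex_ball c ρ) hx hy (by linarith [ht.2]) ht.1.le (by ring)
    rw [hG, indicator_of_mem hmem]
  have hm3 : Measurable (fun p : (Euc d × Euc d) × ℝ => G ((1 - p.2) • p.1.1 + p.2 • p.1.2)) :=
    hGm.comp (by fun_prop)
  calc ∫⁻ x in B, ∫⁻ y in B, ENNReal.ofReal ((f x - f y) ^ 2)
      ≤ ∫⁻ x in B, ∫⁻ y in B, ENNReal.ofReal ((2 * ρ) ^ 2) *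
          ∫⁻ t in Ioc (0:ℝ) 1, G ((1 - t) • x + t • y) := by
        refine setLIntegral_mono' hBm fun x hx => setLIntegral_mono' hBm fun y hy => hpt x hx y hy
    _ = ENNReal.ofReal ((2 * ρ) ^ 2) * ∫⁻ x in B, ∫⁻ y in B,
          ∫⁻ t in Ioc (0:ℝ) 1, G ((1 - t) • x + t • y) := by
        rw [← lintegral_const_mul' _ _ ENNReal.ofReal_ne_top]
        congr 1; ext x
        rw [← lintegral_const_mul' _ _ ENNReal.ofReal_ne_top]
    _ = ENNReal.ofReal ((2 * ρ) ^ 2) * ∫⁻ t in Ioc (0:ℝ) 1, ∫⁻ x in B, ∫⁻ y in B,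
          G ((1 - t) • x + t • y) := by
        congr 1
        have e1 : ∀ x : Euc d, ∫⁻ y in B, ∫⁻ t in Ioc (0:ℝ) 1, G ((1 - t) • x + t • y)
            = ∫⁻ t in Ioc (0:ℝ) 1, ∫⁻ y in B, G ((1 - t) • x + t • y) := by
          intro x
          apply lintegral_lintegral_swap
          exact (hGm.comp (by fun_prop)).aemeasurable
        simp_rw [e1]
        apply lintegral_lintegral_swap
        apply Measurable.aemeasurable
        have : Measurable (fun q : (Euc d × ℝ) × Euc d => G ((1 - q.1.2) • q.1.1 + q.1.2 • q.2)) :=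
          hGm.comp (by fun_prop)
        exact this.lintegral_prod_right'
    _ ≤ ENNReal.ofReal ((2 * ρ) ^ 2) * ∫⁻ t in Ioc (0:ℝ) 1, (2 ^ d * volume B) * ∫⁻ z, G z := by
        refine mul_le_mul' le_rfl (setLIntegral_mono' measurableSet_Ioc fun t ht => ?_)
        rcases le_total (1 / 2) t with h | h
        · calc ∫⁻ x in B, ∫⁻ y in B, G ((1 - t) • x + t • y)
              ≤ ∫⁻ x in B, 2 ^ d * ∫⁻ z, G z := by
                refine lintegral_mono fun x => ?_
                exact (setLIntegral_le_lintegral _ _).trans (aux_scale G hGm _ t h)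
            _ = _ := by rw [setLIntegral_const]; ring
        · have hm : Measurable (Function.uncurry fun x y : Euc d => G ((1 - t) • x + t • y)) :=
            hGm.comp (by fun_prop)
          rw [lintegral_lintegral_swap hm.aemeasurable]
          calc ∫⁻ y in B, ∫⁻ x in B, G ((1 - t) • x + t • y)
              ≤ ∫⁻ x in B, 2 ^ d * ∫⁻ z, G z := by
                refine lintegral_mono fun y => ?_
                refine (setLIntegral_le_lintegral _ _).trans ?_
                simp_rw [add_comm _ (t • y)]
                exact aux_scale G hGm _ (1 - t) (by linarith)
            _ = _ := by rw [setLIntegral_const]; ring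
    _ = ENNReal.ofReal ((2 * ρ) ^ 2) * ((2 ^ d * volume B) * ∫⁻ z, G z) := by
        rw [setLIntegral_const]; simp
    _ ≤ _ := by
        rw [← mul_assoc]
        exact mul_le_mul' le_rfl hGint

/-- `PP W A B`: the mixed oscillation of any differentiable function over `A × B` is controlled by
the Dirichlet energy on a compact subset of `W`. -/
def PP {d : ℕ} (W A B : Set (Euc d)) : Prop :=
  ∃ Q ⊆ W, IsCompact Q ∧ ∃ C : ENNReal, C ≠ ⊤ ∧ ∀ f : Euc d → ℝ, Differentiable ℝ f →
    ∫⁻ x in A, ∫⁻ y in B, ENNReal.ofReal ((f x - f y) ^ 2) ≤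
      C * ∫⁻ z in Q, ENNReal.ofReal (‖fderiv ℝ f z‖ ^ 2)

lemma PP.mono {d : ℕ} {W A B A' B' : Set (Euc d)} (h : PP W A B) (hA : A' ⊆ A) (hB : B' ⊆ B) :
    PP W A' B' := by
  obtain ⟨Q, hQ, hQc, C, hC, hf⟩ := h
  refine ⟨Q, hQ, hQc, C, hC, fun f hd => le_trans ?_ (hf f hd)⟩
  exact (lintegral_mono fun x => lintegral_mono_set hB).trans (lintegral_mono_set hA)

lemma aux_meas2 {d : ℕ} {f : Euc d → ℝ} (hf : Differentiable ℝ f) :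
    Measurable (fun p : Euc d × Euc d => ENNReal.ofReal ((f p.1 - f p.2) ^ 2)) := by
  have := hf.continuous.measurable
  fun_prop

lemma PP.symm {d : ℕ} {W A B : Set (Euc d)} (h : PP W A B) : PP W B A := by
  obtain ⟨Q, hQ, hQc, C, hC, hf⟩ := h
  refine ⟨Q, hQ, hQc, C, hC, fun f hd => le_trans (le_of_eq ?_) (hf f hd)⟩
  rw [lintegral_lintegral_swap (aux_meas2 hd).aemeasurable]
  simp_rw [sub_sq_comm]

lemma PP.union {d : ℕ} {W A A' B : Set (Euc d)} (h : PP W A B) (h' : PP W A' B) :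
    PP W (A ∪ A') B := by
  obtain ⟨Q, hQ, hQc, C, hC, hf⟩ := h
  obtain ⟨Q', hQ', hQc', C', hC', hf'⟩ := h'
  refine ⟨Q ∪ Q', union_subset hQ hQ', hQc.union hQc', C + C', ENNReal.add_ne_top.2 ⟨hC, hC'⟩,
    fun f hd => (lintegral_union_le _ _ _).trans ?_⟩
  rw [add_mul]
  refine add_le_add ((hf f hd).trans ?_) ((hf' f hd).trans ?_)
  · exact mul_le_mul' le_rfl (lintegral_mono_set subset_union_left)
  · exact mul_le_mul' le_rfl (lintegral_mono_set subset_union_right)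

lemma PP.trans {d : ℕ} {W A B D : Set (Euc d)} (h : PP W A B) (h' : PP W B D)
    (hA : volume A ≠ ⊤) (hD : volume D ≠ ⊤) (hB0 : volume B ≠ 0) (hB : volume B ≠ ⊤) :
    PP W A D := by
  obtain ⟨Q, hQ, hQc, C, hC, hf⟩ := h
  obtain ⟨Q', hQ', hQc', C', hC', hf'⟩ := h'.symm
  refine ⟨Q ∪ Q', union_subset hQ hQ', hQc.union hQc',
    (volume B)⁻¹ * (2 * (volume D * C + volume A * C')), ?_, fun f hd => ?_⟩
  · have := ENNReal.inv_ne_top.2 hB0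
    finiteness
  set E := ∫⁻ z in Q ∪ Q', ENNReal.ofReal (‖fderiv ℝ f z‖ ^ 2) with hE
  have m1 : Measurable f := hd.continuous.measurable
  have key : volume B * ∫⁻ x in A, ∫⁻ y in D, ENNReal.ofReal ((f x - f y) ^ 2) ≤
      2 * (volume D * C + volume A * C') * E := by
    calc volume B * ∫⁻ x in A, ∫⁻ y in D, ENNReal.ofReal ((f x - f y) ^ 2)
        = ∫⁻ x in A, ∫⁻ y in D, ∫⁻ z in B, ENNReal.ofReal ((f x - f y) ^ 2) := by
          rw [← lintegral_const_mul' _ _ hB]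
          congr 1; ext x
          rw [← lintegral_const_mul' _ _ hB]
          congr 1; ext y
          rw [setLIntegral_const, mul_comm]
      _ ≤ ∫⁻ x in A, ∫⁻ y in D, ∫⁻ z in B, (2 * ENNReal.ofReal ((f x - f z) ^ 2) +
            2 * ENNReal.ofReal ((f y - f z) ^ 2)) := by
          refine lintegral_mono fun x => lintegral_mono fun y => lintegral_mono fun z => ?_
          dsimp only
          have h2 : (2:ENNReal) = ENNReal.ofReal 2 := by simp
          rw [h2, ← ENNReal.ofReal_mul (by norm_num), ← ENNReal.ofReal_mul (by norm_num),
            ← ENNReal.ofReal_add (by positivity) (by positivity)]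
          apply ENNReal.ofReal_le_ofReal
          nlinarith [sq_nonneg ((f x - f z) + (f y - f z))]
      _ = ∫⁻ x in A, ∫⁻ y in D, (2 * (∫⁻ z in B, ENNReal.ofReal ((f x - f z) ^ 2)) +
            2 * ∫⁻ z in B, ENNReal.ofReal ((f y - f z) ^ 2)) := by
          congr 1; ext x; congr 1; ext y
          rw [lintegral_add_left (by fun_prop), lintegral_const_mul _ (by fun_prop),
            lintegral_const_mul _ (by fun_prop)]
      _ = 2 * (volume D * (∫⁻ x in A, ∫⁻ z in B, ENNReal.ofReal ((f x - f z) ^ 2)) +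
            volume A * ∫⁻ y in D, ∫⁻ z in B, ENNReal.ofReal ((f y - f z) ^ 2)) := by
          have hm : Measurable (fun y => ∫⁻ z in B, ENNReal.ofReal ((f y - f z) ^ 2)) :=
            (aux_meas2 hd).lintegral_prod_right'
          have e : ∀ x, ∫⁻ y in D, (2 * (∫⁻ z in B, ENNReal.ofReal ((f x - f z) ^ 2)) +
            2 * ∫⁻ z in B, ENNReal.ofReal ((f y - f z) ^ 2)) =
              2 * volume D * (∫⁻ z in B, ENNReal.ofReal ((f x - f z) ^ 2)) +
                2 * ∫⁻ y in D, ∫⁻ z in B, ENNReal.ofReal ((f y - f z) ^ 2) := by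
            intro x
            rw [lintegral_add_left measurable_const, setLIntegral_const,
              lintegral_const_mul _ hm]
            ring
          simp_rw [e]
          rw [lintegral_add_right _ measurable_const, setLIntegral_const,
            lintegral_const_mul _ hm]
          ring
      _ ≤ 2 * (volume D * (C * E) + volume A * (C' * E)) := by
          gcongr
          · refine (hf f hd).trans ?_
            exact mul_le_mul' le_rfl (lintegral_mono_set subset_union_left)
          · refine (hf' f hd).trans ?_
            exact mul_le_mul' le_rfl (lintegral_mono_set subset_union_right)
      _ = _ := by ring
  calc ∫⁻ x in A, ∫⁻ y in D, ENNReal.ofReal ((f x - f y) ^ 2)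
      = (volume B)⁻¹ * (volume B * ∫⁻ x in A, ∫⁻ y in D, ENNReal.ofReal ((f x - f y) ^ 2)) := by
        rw [← mul_assoc, ENNReal.inv_mul_cancel hB0 hB, one_mul]
    _ ≤ (volume B)⁻¹ * (2 * (volume D * C + volume A * C') * E) := by gcongr
    _ = _ := by ring

lemma PP.empty {d : ℕ} (W B : Set (Euc d)) : PP W ∅ B :=
  ⟨∅, empty_subset _, isCompact_empty, 0, by simp, by simp⟩

lemma aux_PP_points {d : ℕ} {W : Set (Euc d)} (hW : IsOpen W) (hc : IsPreconnected W)
    {x y : Euc d} (hx : x ∈ W) (hy : y ∈ W) :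
    ∃ r > 0, PP W (Metric.ball x r) (Metric.ball y r) := by
  refine hc.induction₂ (fun x y => ∃ r > 0, PP W (Metric.ball x r) (Metric.ball y r)) ?_ ?_ ?_ hx hy
  · intro x hx
    obtain ⟨ρ, hρ, hsub⟩ := Metric.nhds_basis_closedBall.mem_iff.1 (hW.mem_nhds hx)
    have hPP : PP W (Metric.ball x ρ) (Metric.ball x ρ) :=
      ⟨Metric.closedBall x ρ, hsub, isCompact_closedBall _ _, _,
        by have : volume (Metric.ball x ρ) ≠ ⊤ := measure_ball_lt_top.ne
           finiteness, fun f hf => aux_ball x ρ f hf⟩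
    filter_upwards [mem_nhdsWithin_of_mem_nhds (Metric.ball_mem_nhds x (half_pos hρ))] with y hy
    refine ⟨ρ / 2, half_pos hρ, hPP.mono (Metric.ball_subset_ball (by linarith)) ?_⟩
    apply Metric.ball_subset_ball'
    have := Metric.mem_ball.1 hy
    linarith
  · rintro x y z - - - ⟨r, hr, h⟩ ⟨s, hs, h'⟩
    have hm : 0 < min r s := lt_min hr hs
    refine ⟨min r s, hm, PP.trans (B := Metric.ball y (min r s)) (h.mono ?_ ?_) (h'.mono ?_ ?_)
      measure_ball_lt_top.ne measure_ball_lt_top.ne (Metric.measure_ball_pos _ _ hm).ne'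
      measure_ball_lt_top.ne⟩
    all_goals exact Metric.ball_subset_ball (by simp)
  · rintro x y - - ⟨r, hr, h⟩
    exact ⟨r, hr, h.symm⟩

lemma aux_PP_compact {d : ℕ} {W A : Set (Euc d)} (hW : IsOpen W) (hc : IsPreconnected W)
    (hA : IsCompact A) (hAW : A ⊆ W) : PP W A A := by
  have h1 : ∀ y ∈ W, ∃ r > 0, PP W A (Metric.ball y r) := by
    intro y hy
    refine hA.induction_on (p := fun s => ∃ r > 0, PP W s (Metric.ball y r)) ?_ ?_ ?_ ?_
    · exact ⟨1, one_pos, PP.empty _ _⟩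
    · rintro s t hst ⟨r, hr, h⟩
      exact ⟨r, hr, h.mono hst subset_rfl⟩
    · rintro s t ⟨r, hr, h⟩ ⟨r', hr', h'⟩
      exact ⟨min r r', lt_min hr hr', (h.mono subset_rfl (Metric.ball_subset_ball (by simp))).union
        (h'.mono subset_rfl (Metric.ball_subset_ball (by simp)))⟩
    · intro x hx
      obtain ⟨r, hr, h⟩ := aux_PP_points hW hc (hAW hx) hy
      exact ⟨_, mem_nhdsWithin_of_mem_nhds (Metric.ball_mem_nhds x hr), r, hr, h⟩
  refine hA.induction_on (p := fun s => PP W s A) (PP.empty _ _) (fun s t hst h => h.mono hst subset_rfl)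
    (fun s t h h' => h.union h') fun y hy => ?_
  obtain ⟨r, hr, h⟩ := h1 y (hAW hy)
  exact ⟨_, mem_nhdsWithin_of_mem_nhds (Metric.ball_mem_nhds y hr), h.symm⟩

lemma aux_jensen {d : ℕ} (f : Euc d → ℝ) (hf : Differentiable ℝ f) (U V : Set (Euc d))
    (hV0 : volume V ≠ 0) (hV : volume V ≠ ⊤) (hint : IntegrableOn f V) :
    ENNReal.ofReal (∫ x in U, (f x - (volume V).toReal⁻¹ * ∫ y in V, f y) ^ 2) ≤
      (volume V)⁻¹ * ∫⁻ x in U, ∫⁻ y in V, ENNReal.ofReal ((f x - f y) ^ 2) := by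
  set v := (volume V).toReal with hv
  have hvpos : 0 < v := ENNReal.toReal_pos hV0 hV
  have hVv : volume V = ENNReal.ofReal v := (ENNReal.ofReal_toReal hV).symm
  have hcont := hf.continuous
  have hm : Measurable f := hcont.measurable
  have hpt : ∀ x, ENNReal.ofReal ((f x - v⁻¹ * ∫ y in V, f y) ^ 2) ≤
      (volume V)⁻¹ * ∫⁻ y in V, ENNReal.ofReal ((f x - f y) ^ 2) := by
    intro x
    have e1 : f x - v⁻¹ * ∫ y in V, f y = v⁻¹ * ∫ y in V, (f x - f y) := by
      have : IsFiniteMeasure (volume.restrict V) := ⟨by simpa using hV.lt_top⟩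
      rw [integral_sub (integrable_const _) hint, integral_const]
      simp only [Measure.real, Measure.restrict_apply_univ, ← hv, smul_eq_mul]
      field_simp
    have e2 : ‖v⁻¹‖ₑ = (volume V)⁻¹ := by
      rw [hVv, Real.enorm_of_nonneg (by positivity), ENNReal.ofReal_inv_of_pos hvpos]
    rw [e1, ← aux_enorm_sq, enorm_mul, mul_pow, e2]
    calc (volume V)⁻¹ ^ 2 * ‖∫ y in V, (f x - f y)‖ₑ ^ 2
        ≤ (volume V)⁻¹ ^ 2 * (∫⁻ y in V, ‖f x - f y‖ₑ) ^ 2 := by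
          gcongr; exact enorm_integral_le_lintegral_enorm _
      _ ≤ (volume V)⁻¹ ^ 2 * (volume V * ∫⁻ y in V, ‖f x - f y‖ₑ ^ 2) := by
          gcongr
          refine (aux_CS _ _ (by fun_prop)).trans (by simp)
      _ = ((volume V)⁻¹ * volume V) * ((volume V)⁻¹ * ∫⁻ y in V, ‖f x - f y‖ₑ ^ 2) := by ring
      _ = _ := by
          rw [ENNReal.inv_mul_cancel hV0 hV, one_mul]
          simp_rw [aux_enorm_sq]
  rw [integral_eq_lintegral_of_nonneg_ae (Eventually.of_forall fun x => by positivity)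
    (by fun_prop)]
  refine ENNReal.ofReal_toReal_le.trans ?_
  rw [← lintegral_const_mul' _ _ (ENNReal.inv_ne_top.2 hV0)]
  exact lintegral_mono hpt

lemma aux_quad (c L : ℝ) (hc : 0 ≤ c)
    (hmin : ∀ t : ℝ, 2⁻¹ * c - L ≤ 2⁻¹ * (t ^ 2 * c) - t * L) : c = L := by
  by_contra hne
  have hD : 0 < (c - L) ^ 2 := by
    have : c - L ≠ 0 := sub_ne_zero.2 hne
    positivity
  have h1 := hmin (1 - (c - L) / (c + 1))
  have hcp : 0 < c + 1 := by linarith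
  have h2 : 2⁻¹ * ((1 - (c - L) / (c + 1)) ^ 2 * c) - (1 - (c - L) / (c + 1)) * L
      - (2⁻¹ * c - L) = (c - L) ^ 2 * (c - 2 * (c + 1)) / (2 * (c + 1) ^ 2) := by
    field_simp
    ring
  have h3 : (c - L) ^ 2 * (c - 2 * (c + 1)) / (2 * (c + 1) ^ 2) < 0 := by
    apply div_neg_of_neg_of_pos _ (by positivity)
    apply mul_neg_of_pos_of_neg hD
    linarith
  linarith

lemma aux_gradient_smul {d : ℕ} (f : Euc d → ℝ) (hf : Differentiable ℝ f) (t : ℝ) (x : Euc d) :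
    ‖gradient (fun ξ => t * f ξ) x‖ ^ 2 = t ^ 2 * ‖gradient f x‖ ^ 2 := by
  simp only [gradient, LinearIsometryEquiv.norm_map]
  rw [fderiv_const_mul (hf x), norm_smul, mul_pow]
  simp

lemma aux_norm_gradient {d : ℕ} (f : Euc d → ℝ) (x : Euc d) :
    ‖gradient f x‖ = ‖fderiv ℝ f x‖ := by
  simp only [gradient, LinearIsometryEquiv.norm_map]

lemma aux_tendsto (δ : ℝ) (hδ : 0 < δ) :
    Tendsto (fun ε : ℝ => ε⁻¹ * Real.exp (-δ / ε)) (𝓝[>] 0) (𝓝 0) := by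
  have h1 : Tendsto (fun ε : ℝ => δ * ε⁻¹) (𝓝[>] 0) atTop :=
    tendsto_inv_nhdsGT_zero.const_mul_atTop hδ
  have h2 := ((tendsto_pow_mul_exp_neg_atTop_nhds_zero 1).comp h1).const_mul δ⁻¹
  simp only [mul_zero] at h2
  refine h2.congr fun ε => ?_
  simp only [Function.comp, pow_one]
  rw [← mul_assoc, inv_mul_cancel_left₀ hδ.ne', div_eq_mul_inv, neg_mul]

lemma aux_compact_sublevel {d : ℕ} {Φ : Euc d → ℝ} (hc : Continuous Φ)
    (hcoer : Tendsto Φ (cocompact (Euc d)) atTop) (a : ℝ) : IsCompact {ξ | Φ ξ ≤ a} := by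
  obtain ⟨t, ht, hts⟩ := mem_cocompact.1 (hcoer.eventually (eventually_gt_atTop a))
  refine ht.of_isClosed_subset (isClosed_le hc continuous_const) fun ξ hξ => ?_
  by_contra hn
  have : a < Φ ξ := hts hn
  exact absurd this (not_lt.2 hξ)

lemma aux_Z {d : ℕ} {Φ : Euc d → ℝ} (hc : Continuous Φ)
    (hcoer : Tendsto Φ (cocompact (Euc d)) atTop)
    (htight : ∀ a : ℝ, 0 ≤ a → ∃ C > 0, ∀ ε ∈ Set.Ioo (0:ℝ) 1,
      (∫ ξ in {ξ : Euc d | a ≤ Φ ξ}, Real.exp (-Φ ξ / ε)) ≤ C * Real.exp (-a / ε))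
    (h : ℝ) (hmin : ∀ ξ, h ≤ Φ ξ) :
    ∃ C > 0, ∀ ε ∈ Set.Ioo (0:ℝ) 1, Zpart Φ ε ≤ C * Real.exp (-h / ε) := by
  obtain ⟨C, hC, hCb⟩ := htight (max h 0) (le_max_right _ _)
  set a := max h 0
  refine ⟨C + (volume {ξ | Φ ξ ≤ a}).toReal, by positivity, fun ε hε => ?_⟩
  have hε0 : 0 < ε := hε.1
  unfold Zpart
  by_cases hi : Integrable (fun ξ => Real.exp (-Φ ξ / ε))
  · have hms : MeasurableSet {ξ : Euc d | a ≤ Φ ξ} := (isClosed_le continuous_const hc).measurableSet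
    rw [← integral_add_compl hms hi, add_mul]
    refine add_le_add ((hCb ε hε).trans ?_) ?_
    · gcongr
      exact le_max_left _ _
    · have hfinite : volume {ξ | Φ ξ ≤ a} < ⊤ := (aux_compact_sublevel hc hcoer a).measure_lt_top
      calc ∫ ξ in {ξ : Euc d | a ≤ Φ ξ}ᶜ, Real.exp (-Φ ξ / ε)
          ≤ ∫ ξ in {ξ : Euc d | Φ ξ ≤ a}, Real.exp (-Φ ξ / ε) := by
            refine setIntegral_mono_set hi.integrableOn
              (Eventually.of_forall fun x => (Real.exp_pos _).le) ?_
            refine HasSubset.Subset.eventuallyLE fun ξ hξ => ?_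
            have hξ' : ¬ a ≤ Φ ξ := hξ
            exact (not_le.1 hξ').le
        _ ≤ ‖∫ ξ in {ξ : Euc d | Φ ξ ≤ a}, Real.exp (-Φ ξ / ε)‖ := le_abs_self _
        _ ≤ Real.exp (-h / ε) * volume.real {ξ : Euc d | Φ ξ ≤ a} := by
            refine norm_setIntegral_le_of_norm_le_const hfinite fun ξ _ => ?_
            rw [Real.norm_of_nonneg (Real.exp_pos _).le]
            gcongr
            exact hmin ξ
        _ = _ := by rw [mul_comm]; rfl
  · rw [integral_undef hi]; positivity

/-- **L² estimate on extended valleys:** `‖φ^ε − λ_{ε,i}‖_{L²(Ṽ_i)} = o_ε(1) λ_ε^{1/2}`. -/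
theorem L2_estimate_on_extended_valleys
    (d K : ℕ) (hd : 1 ≤ d) (hK : 2 ≤ K)
    (Φ : Euc d → ℝ) (hΦ : ContDiff ℝ (⊤ : ℕ∞) Φ)
    (hcoer : Tendsto Φ (cocompact (Euc d)) atTop)
    (hfin : {ξ : Euc d | fderiv ℝ Φ ξ = 0}.Finite)
    (htight : ∀ a : ℝ, 0 ≤ a → ∃ C > 0, ∀ ε ∈ Set.Ioo (0:ℝ) 1,
      (∫ ξ in {ξ : Euc d | a ≤ Φ ξ}, Real.exp (-Φ ξ / ε)) ≤ C * Real.exp (-a / ε))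
    (H h : ℝ) (hhH : h < H)
    (W : Fin K → Set (Euc d)) (m : Fin K → Euc d)
    (hWc : ∀ i, W i = connectedComponentIn {ξ : Euc d | Φ ξ < H} (m i))
    (hWcover : {ξ : Euc d | Φ ξ < H} = ⋃ i, W i)
    (hWdisj : Pairwise (Function.onFun Disjoint W))
    (hUconn : IsConnected (⋃ i, closure (W i)))
    (hmmem : ∀ i, m i ∈ W i) (hmval : ∀ i, Φ (m i) = h)
    (hmmin : ∀ i, ∀ ξ ∈ W i, h ≤ Φ ξ)
    (hmnd : ∀ i, 0 < (hessian Φ (m i)).det)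
    (S : Finset (Euc d))
    (hS : ∀ σ ∈ S, Φ σ = H ∧ fderiv ℝ Φ σ = 0)
    (hSfull : ∀ ξ : Euc d, fderiv ℝ Φ ξ = 0 → Φ ξ = H → ξ ∈ S)
    (lam : Euc d → ℝ)
    (hlam : ∀ σ ∈ S, 0 < lam σ ∧
      Module.End.HasEigenvalue (Matrix.toLin' (hessian Φ σ)) (-lam σ) ∧
      (∀ r : ℝ, Module.End.HasEigenvalue (Matrix.toLin' (hessian Φ σ)) r → r = -lam σ ∨ 0 < r) ∧
      Module.finrank ℝ (Module.End.eigenspace (Matrix.toLin' (hessian Φ σ)) (-lam σ)) = 1)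
    (hdetS : ∀ σ ∈ S, (hessian Φ σ).det < 0)
    (η : ℝ) (hηpos : 0 < η) (hηlt : η < H - h)
    (hnoc : ∀ ξ : Euc d, fderiv ℝ Φ ξ = 0 → Φ ξ ∉ Set.Ioo (H - η) H)
    (V : Fin K → Set (Euc d)) (hV : ∀ i, V i = {ξ | ξ ∈ W i ∧ Φ ξ < H - η})
    (i1 i2 : Fin K) (hi1 : (i1 : ℕ) = 0) (hi2 : (i2 : ℕ) = 1)
    (Ifun : ℝ → (Euc d → ℝ) → ℝ)
    (hIfun : ∀ ε : ℝ, ∀ ψ : Euc d → ℝ, Ifun ε ψ =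
      2⁻¹ * (∫ ξ : Euc d, (sigma Φ ε ξ / tau H h ε) * ‖gradient ψ ξ‖^2)
        - (volume (V i1)).toReal⁻¹ * (∫ ξ in V i1, ψ ξ)
        + (volume (V i2)).toReal⁻¹ * (∫ ξ in V i2, ψ ξ))
    (φ : ℝ → Euc d → ℝ)
    (hφreg : ∀ ε ∈ Set.Ioo (0:ℝ) 1, Differentiable ℝ (φ ε) ∧
      Integrable (fun ξ => (sigma Φ ε ξ / tau H h ε) * ‖gradient (φ ε) ξ‖^2))
    (hφmin : ∀ ε ∈ Set.Ioo (0:ℝ) 1, ∀ ψ : Euc d → ℝ, Differentiable ℝ ψ →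
      Integrable (fun ξ => (sigma Φ ε ξ / tau H h ε) * ‖gradient ψ ξ‖^2) →
      Ifun ε (φ ε) ≤ Ifun ε ψ)
    (lamE : ℝ → Fin K → ℝ)
    (hlamE : ∀ ε i, lamE ε i = (volume (V i)).toReal⁻¹ * ∫ ξ in V i, φ ε ξ)
    (hnorm : ∀ ε ∈ Set.Ioo (0:ℝ) 1, lamE ε i1 = -(lamE ε i2) ∧ 0 ≤ lamE ε i1)
    (η' : ℝ) (hη'pos : 0 < η') (hη'lt : η' < η)
    (Vt : Fin K → Set (Euc d))
    (hVt : ∀ i, Vt i = connectedComponentIn {ξ | ξ ∈ W i ∧ Φ ξ < H - η'} (m i)) :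
    ∃ err : ℝ → ℝ, Tendsto err (𝓝[>] (0:ℝ)) (𝓝 0) ∧
      ∀ ε ∈ Set.Ioo (0:ℝ) 1, ∀ i,
        Real.sqrt (∫ ξ in Vt i, (φ ε ξ - lamE ε i)^2) ≤ err ε * Real.sqrt (lamE ε i1) := by
  have hc : Continuous Φ := hΦ.continuous
  have hmin : ∀ ξ, h ≤ Φ ξ := by
    intro ξ
    by_cases hξ : Φ ξ < H
    · have : ξ ∈ ⋃ i, W i := by rw [← hWcover]; exact hξ
      obtain ⟨i, hi⟩ := mem_iUnion.1 this
      exact hmmin i ξ hi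
    · linarith
  have hWopen : ∀ i, IsOpen (W i) := fun i => by
    rw [hWc i]; exact (isOpen_lt hc continuous_const).connectedComponentIn
  have hWpre : ∀ i, IsPreconnected (W i) := fun i => by
    rw [hWc i]; exact isPreconnected_connectedComponentIn
  have hWlt : ∀ i, ∀ ξ ∈ W i, Φ ξ < H := fun i ξ hξ => by
    have : ξ ∈ {ξ : Euc d | Φ ξ < H} := by rw [hWcover]; exact mem_iUnion.2 ⟨i, hξ⟩
    exact this
  have hAcomp : ∀ i, IsCompact {ξ | ξ ∈ W i ∧ Φ ξ ≤ H - η'} := by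
    intro i
    have : {ξ | ξ ∈ W i ∧ Φ ξ ≤ H - η'} = {ξ | Φ ξ ≤ H - η'} \ ⋃ j, ⋃ _ : j ≠ i, W j := by
      ext ξ
      simp only [mem_setOf_eq, mem_diff, mem_iUnion, not_exists]
      constructor
      · rintro ⟨h1, h2⟩
        exact ⟨h2, fun j hj hjm => (Set.disjoint_left.1 (hWdisj hj) hjm h1)⟩
      · rintro ⟨h1, h2⟩
        refine ⟨?_, h1⟩
        have : ξ ∈ ⋃ i, W i := by
          rw [← hWcover]; show Φ ξ < H; linarith
        obtain ⟨j, hj⟩ := mem_iUnion.1 this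
        by_cases hji : j = i
        · exact hji ▸ hj
        · exact absurd hj (h2 j hji)
    rw [this]
    exact (aux_compact_sublevel hc hcoer _).diff
      (isOpen_iUnion fun j => isOpen_iUnion fun _ => hWopen j)
  have hVA : ∀ i, V i ⊆ {ξ | ξ ∈ W i ∧ Φ ξ ≤ H - η'} := fun i ξ hξ => by
    rw [hV i] at hξ; exact ⟨hξ.1, by linarith [hξ.2]⟩
  have hVtA : ∀ i, Vt i ⊆ {ξ | ξ ∈ W i ∧ Φ ξ ≤ H - η'} := fun i ξ hξ => by
    rw [hVt i] at hξ
    have := connectedComponentIn_subset _ _ hξ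
    exact ⟨this.1, this.2.le⟩
  have hVopen : ∀ i, IsOpen (V i) := fun i => by
    rw [hV i]; exact (hWopen i).inter (isOpen_lt hc continuous_const)
  have hmV : ∀ i, m i ∈ V i := fun i => by
    rw [hV i]; exact ⟨hmmem i, by rw [hmval i]; linarith⟩
  have hV0 : ∀ i, volume (V i) ≠ 0 := fun i =>
    ((hVopen i).measure_pos volume ⟨m i, hmV i⟩).ne'
  have hVtop : ∀ i, volume (V i) ≠ ⊤ := fun i =>
    ((measure_mono (hVA i)).trans_lt (hAcomp i).measure_lt_top).ne
  have hint : ∀ i, ∀ f : Euc d → ℝ, Differentiable ℝ f → IntegrableOn f (V i) := fun i f hf =>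
    (hf.continuous.continuousOn.integrableOn_compact (hAcomp i)).mono_set (hVA i)
  obtain ⟨CZ, hCZ, hZ⟩ := aux_Z hc hcoer htight h hmin
  have hne : i1 ≠ i2 := by
    intro he; rw [he, hi2] at hi1; omega
  have hVdisj : Disjoint (V i2) (V i1) := by
    refine (hWdisj hne.symm).mono ?_ ?_
    · intro ξ hξ; exact (hVA _ hξ).1
    · intro ξ hξ; exact (hVA _ hξ).1
  -- positivity of the partition function
  have hZpos : ∀ ε ∈ Set.Ioo (0:ℝ) 1, 0 < Zpart Φ ε := by
    intro ε hε
    refine lt_of_le_of_ne (integral_nonneg fun ξ => (Real.exp_pos _).le) fun hz => ?_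
    have hs : ∀ ξ, sigma Φ ε ξ = 0 := fun ξ => by simp [sigma, ← hz]
    obtain ⟨ρ, hρ, hsub⟩ := Metric.isOpen_iff.1 (hVopen i1) (m i1) (hmV i1)
    let b : ContDiffBump (m i1) := ⟨ρ / 2, ρ, by positivity, by linarith⟩
    have hbd : Differentiable ℝ (b : Euc d → ℝ) := (b.contDiff (n := 1)).differentiable (by norm_num)
    have hb0 : ∀ ξ, ξ ∉ V i1 → b ξ = 0 := by
      intro ξ hξ
      by_contra hb
      have : ξ ∈ Function.support b := hb
      rw [b.support_eq] at this
      exact hξ (hsub this)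
    have hb1 : 0 < ∫ ξ in V i1, b ξ := by
      rw [setIntegral_eq_integral_of_forall_compl_eq_zero hb0]
      exact b.integral_pos
    have hb2 : ∫ ξ in V i2, b ξ = 0 :=
      setIntegral_eq_zero_of_forall_eq_zero fun ξ hξ => hb0 ξ (Set.disjoint_left.1 hVdisj hξ)
    set β := (volume (V i1)).toReal⁻¹ * ∫ ξ in V i1, b ξ with hβ
    have hβpos : 0 < β := mul_pos (inv_pos.2 (ENNReal.toReal_pos (hV0 _) (hVtop _))) hb1
    set t := (1 - Ifun ε (φ ε)) / β with ht
    have hcmp := hφmin ε hε (fun ξ => t * b ξ) (hbd.const_mul t) (by simp [hs])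
    rw [hIfun ε (fun ξ => t * b ξ)] at hcmp
    simp only [hs, zero_div, zero_mul, integral_zero, mul_zero, integral_const_mul, hb2, add_zero,
      zero_sub] at hcmp
    have : (volume (V i1)).toReal⁻¹ * (t * ∫ ξ in V i1, b ξ) = t * β := by rw [hβ]; ring
    rw [this, ht, div_mul_cancel₀ _ hβpos.ne'] at hcmp
    linarith
  -- energy identity
  have hen : ∀ ε ∈ Set.Ioo (0:ℝ) 1,
      ∫ ξ : Euc d, (sigma Φ ε ξ / tau H h ε) * ‖gradient (φ ε) ξ‖^2 = 2 * lamE ε i1 := by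
    intro ε hε
    obtain ⟨hd1, hi⟩ := hφreg ε hε
    have hε0 : 0 < ε := hε.1
    have hL : 2 * lamE ε i1 = lamE ε i1 - lamE ε i2 := by
      have := (hnorm ε hε).1; linarith
    rw [hL]
    refine aux_quad _ _ (integral_nonneg fun ξ => ?_) fun t => ?_
    · have := hZpos ε hε
      simp only [sigma, tau, Pi.zero_apply]
      positivity
    · have e : ∀ ξ, (sigma Φ ε ξ / tau H h ε) * ‖gradient (fun ξ => t * φ ε ξ) ξ‖^2 =
          t ^ 2 * ((sigma Φ ε ξ / tau H h ε) * ‖gradient (φ ε) ξ‖^2) := fun ξ => by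
        rw [aux_gradient_smul _ hd1]; ring
      have hcmp := hφmin ε hε (fun ξ => t * φ ε ξ) (hd1.const_mul t) (by
        simp_rw [e]; exact hi.const_mul _)
      rw [hIfun, hIfun] at hcmp
      simp_rw [e, integral_const_mul] at hcmp
      rw [hlamE, hlamE]
      linarith
  have hmain : ∀ i, ∃ M δ : ℝ, 0 ≤ M ∧ 0 < δ ∧ ∀ ε ∈ Set.Ioo (0:ℝ) 1,
      ∫ ξ in Vt i, (φ ε ξ - lamE ε i)^2 ≤ M * (ε⁻¹ * Real.exp (-δ / ε)) * lamE ε i1 := by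
    intro i
    obtain ⟨Q, hQW, hQc, C, hC, hP⟩ := (aux_PP_compact (hWopen i) (hWpre i) (hAcomp i)
      (fun ξ hξ => hξ.1)).mono (hVtA i) (hVA i)
    obtain ⟨δ, hδ, hQδ⟩ : ∃ δ > 0, ∀ z ∈ Q, Φ z ≤ H - δ := by
      rcases Q.eq_empty_or_nonempty with he | hne
      · exact ⟨1, one_pos, by simp [he]⟩
      · obtain ⟨z, hz, hmax⟩ := hQc.exists_isMaxOn hne hc.continuousOn
        refine ⟨H - Φ z, by linarith [hWlt i z (hQW hz)], fun w hw => ?_⟩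
        have : Φ w ≤ Φ z := hmax hw
        linarith
    set N := (volume (V i))⁻¹ * C with hN
    have hNtop : N ≠ ⊤ := ENNReal.mul_ne_top (ENNReal.inv_ne_top.2 (hV0 i)) hC
    refine ⟨N.toReal * CZ * 2, δ, by positivity, hδ, fun ε hε => ?_⟩
    obtain ⟨hd1, hi⟩ := hφreg ε hε
    have hε0 : 0 < ε := hε.1
    have hZp := hZpos ε hε
    have hlam0 := (hnorm ε hε).2
    set κ := CZ * (ε⁻¹ * Real.exp (-δ / ε)) with hκ
    have hκ0 : 0 ≤ κ := by positivity
    have hpt : ∀ z ∈ Q, ‖fderiv ℝ (φ ε) z‖ ^ 2 ≤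
        κ * ((sigma Φ ε z / tau H h ε) * ‖gradient (φ ε) z‖ ^ 2) := by
      intro z hz
      rw [aux_norm_gradient, ← mul_assoc]
      have h1 : 1 ≤ κ * (sigma Φ ε z / tau H h ε) := by
        have e1 : κ * (sigma Φ ε z / tau H h ε) =
            (CZ * Real.exp (-h / ε)) * (Zpart Φ ε)⁻¹ * Real.exp ((H - δ - Φ z) / ε) := by
          have e2 : Real.exp (-h / ε) * Real.exp ((H - δ - Φ z) / ε) =
              Real.exp (-δ / ε) * Real.exp (-Φ z / ε) * (Real.exp (-(H - h) / ε))⁻¹ := by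
            rw [← Real.exp_neg, ← Real.exp_add, ← Real.exp_add, ← Real.exp_add]
            congr 1; ring
          calc κ * (sigma Φ ε z / tau H h ε) = CZ * (Zpart Φ ε)⁻¹ *
                (Real.exp (-δ / ε) * Real.exp (-Φ z / ε) * (Real.exp (-(H - h) / ε))⁻¹) := by
                rw [hκ, sigma, tau]; field_simp
            _ = _ := by rw [← e2]; ring
        rw [e1]
        have h2 : 1 ≤ (CZ * Real.exp (-h / ε)) * (Zpart Φ ε)⁻¹ := by
          rw [← div_eq_mul_inv, one_le_div hZp]; exact hZ ε hε
        have h3 : 1 ≤ Real.exp ((H - δ - Φ z) / ε) := by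
          rw [Real.one_le_exp_iff]
          exact div_nonneg (by linarith [hQδ z hz]) hε0.le
        exact one_le_mul_of_one_le_of_one_le h2 h3
      exact le_mul_of_one_le_left (by positivity) h1
    have hnn : ∀ ξ, 0 ≤ κ * ((sigma Φ ε ξ / tau H h ε) * ‖gradient (φ ε) ξ‖ ^ 2) := by
      intro ξ
      simp only [sigma, tau]
      positivity
    have hQe : ∫⁻ z in Q, ENNReal.ofReal (‖fderiv ℝ (φ ε) z‖ ^ 2) ≤
        ENNReal.ofReal (κ * (2 * lamE ε i1)) := by
      calc ∫⁻ z in Q, ENNReal.ofReal (‖fderiv ℝ (φ ε) z‖ ^ 2)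
          ≤ ∫⁻ z in Q, ENNReal.ofReal
              (κ * ((sigma Φ ε z / tau H h ε) * ‖gradient (φ ε) z‖ ^ 2)) :=
            setLIntegral_mono' hQc.measurableSet fun z hz => ENNReal.ofReal_le_ofReal (hpt z hz)
        _ ≤ ∫⁻ z, ENNReal.ofReal
              (κ * ((sigma Φ ε z / tau H h ε) * ‖gradient (φ ε) z‖ ^ 2)) :=
            setLIntegral_le_lintegral _ _
        _ = ENNReal.ofReal (∫ z, κ * ((sigma Φ ε z / tau H h ε) * ‖gradient (φ ε) z‖ ^ 2)) :=
            (ofReal_integral_eq_lintegral_ofReal (hi.const_mul κ) (Eventually.of_forall hnn)).symm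
        _ = _ := by rw [integral_const_mul, hen ε hε]
    have hJ := aux_jensen (φ ε) hd1 (Vt i) (V i) (hV0 i) (hVtop i) (hint i _ hd1)
    rw [← hlamE] at hJ
    have hfinal : ENNReal.ofReal (∫ ξ in Vt i, (φ ε ξ - lamE ε i)^2) ≤
        ENNReal.ofReal (N.toReal * (κ * (2 * lamE ε i1))) := by
      refine hJ.trans ?_
      rw [ENNReal.ofReal_mul ENNReal.toReal_nonneg, ENNReal.ofReal_toReal hNtop, hN, mul_assoc]
      gcongr
      refine (hP _ hd1).trans ?_
      gcongr
    have := (ENNReal.ofReal_le_ofReal_iff (by positivity)).1 hfinal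
    refine this.trans (le_of_eq ?_)
    rw [hκ]; ring
  choose M δ hM hδ hb using hmain
  refine ⟨fun ε => ∑ i, Real.sqrt (M i * (ε⁻¹ * Real.exp (-δ i / ε))), ?_, fun ε hε i => ?_⟩
  · have : Tendsto (fun ε : ℝ => ∑ i, Real.sqrt (M i * (ε⁻¹ * Real.exp (-δ i / ε)))) (𝓝[>] 0)
        (𝓝 (∑ i : Fin K, Real.sqrt (M i * 0))) :=
      tendsto_finsetSum _ fun i _ => ((aux_tendsto (δ i) (hδ i)).const_mul (M i)).sqrt
    simpa using this
  · have hε0 : 0 < ε := hε.1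
    have hnn : 0 ≤ M i * (ε⁻¹ * Real.exp (-δ i / ε)) := mul_nonneg (hM i) (by positivity)
    calc Real.sqrt (∫ ξ in Vt i, (φ ε ξ - lamE ε i)^2)
        ≤ Real.sqrt (M i * (ε⁻¹ * Real.exp (-δ i / ε)) * lamE ε i1) := Real.sqrt_le_sqrt (hb i ε hε)
      _ = Real.sqrt (M i * (ε⁻¹ * Real.exp (-δ i / ε))) * Real.sqrt (lamE ε i1) :=
          Real.sqrt_mul hnn _
      _ ≤ _ := by
          gcongr
          exact Finset.single_le_sum (f := fun i => Real.sqrt (M i * (ε⁻¹ * Real.exp (-δ i / ε))))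
            (fun j _ => Real.sqrt_nonneg _) (Finset.mem_univ i)
end
end

section
/- (L∞ estimate on valleys) Fix p ∈ (d, ∞). Let φ^ε be the normalized minimizer of I as above, with λ_{ε,i} = |V_i|^{-1}∫_{V_i} φ^ε dξ and λ_ε = λ_{ε,1} = −λ_{ε,2} ≥ 0, additionally normalized so that sup_{ℝ^d} |φ^ε| = max(sup_{V_1}|φ^ε|, sup_{V_2}|φ^ε|). Then for every 1 ≤ i ≤ K, ‖φ^ε − λ_{ε,i}‖_{L^∞(V_i)} ≤ o_ε(1) · (1 + λ_ε^{1 − 1/p}) as ε → 0. -/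
open MeasureTheory Real Filter Topology Set

noncomputable section

lemma exists_kernel (d : ℕ) (hd : 1 ≤ d) : ∃ χ ρ : Euc d → ℝ,
    ContDiff ℝ (⊤ : ℕ∞) χ ∧ ContDiff ℝ (⊤ : ℕ∞) ρ ∧ (∀ z, 0 ≤ ρ z) ∧
    (∀ z, 1 ≤ ‖z‖ → ρ z = 0) ∧ (∀ z, 1 ≤ ‖z‖ → χ z = 0) ∧
    (∀ z v, fderiv ℝ χ z v = - (ρ z * inner ℝ z v)) ∧ (∫ z, ρ z = 1) := by
  set s := Real.smoothTransition
  have hs : ContDiff ℝ (⊤ : ℕ∞) s := Real.smoothTransition.contDiff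
  have hs' : ContDiff ℝ (⊤ : ℕ∞) (deriv s) := by
    have := contDiff_infty_iff_deriv.1 hs
    exact this.2
  have hq : ContDiff ℝ (⊤ : ℕ∞) (fun z : Euc d => 1 - ‖z‖ ^ 2) := 
    contDiff_const.sub (contDiff_norm_sq ℝ)
  have hmono : Monotone s := Real.smoothTransition.monotone
  have hder0 : ∀ x, 0 ≤ deriv s x := fun x => hmono.deriv_nonneg
  have hderz : ∀ x ≤ 0, deriv s x = 0 := by
    have hlt : ∀ x < 0, deriv s x = 0 := by
      intro x hx
      have : s =ᶠ[𝓝 x] fun _ => 0 := by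
        filter_upwards [Iio_mem_nhds hx] with y hy
        exact Real.smoothTransition.zero_of_nonpos (le_of_lt hy)
      rw [this.deriv_eq]; simp
    intro x hx
    have hcl : IsClosed {x | deriv s x = 0} := isClosed_eq hs'.continuous continuous_const
    have : Iic (0:ℝ) ⊆ {x | deriv s x = 0} := by
      rw [← closure_Iio]
      exact hcl.closure_subset_iff.2 hlt
    exact this hx
  set ρ0 : Euc d → ℝ := fun z => 2 * deriv s (1 - ‖z‖ ^ 2)
  have hρ0 : ContDiff ℝ (⊤ : ℕ∞) ρ0 := contDiff_const.mul (hs'.comp hq)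
  have hρ0z : ∀ z, 1 ≤ ‖z‖ → ρ0 z = 0 := by
    intro z hz
    simp only [ρ0]
    rw [hderz _ (by nlinarith)]; simp
  have hρ0n : ∀ z, 0 ≤ ρ0 z := fun z => mul_nonneg (by norm_num) (hder0 _)
  have hcs : HasCompactSupport ρ0 := by
    apply HasCompactSupport.intro (isCompact_closedBall (0 : Euc d) 1)
    intro x hx
    apply hρ0z
    simp at hx; exact hx.le
  have hpos : 0 < ∫ z, ρ0 z := by
    have hsd : Differentiable ℝ s := hs.differentiable (by simp)
    obtain ⟨c, hc, hc'⟩ := exists_deriv_eq_slope s (zero_lt_one' ℝ) hs.continuous.continuousOn 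
      hsd.differentiableOn
    have hc1 : deriv s c = 1 := by
      rw [hc']
      simp [s, Real.smoothTransition.zero, Real.smoothTransition.one]
    apply hρ0.continuous.integral_pos_of_hasCompactSupport_nonneg_nonzero hcs hρ0n 
      (x := EuclideanSpace.single ⟨0, hd⟩ (√(1 - c)))
    simp only [ρ0, PiLp.norm_single, norm_eq_abs, sq_abs]
    rw [Real.sq_sqrt (by linarith [hc.2])]
    simp [hc1]
  set I := ∫ z, ρ0 z
  refine ⟨fun z => I⁻¹ * s (1 - ‖z‖ ^ 2), fun z => I⁻¹ * ρ0 z, contDiff_const.mul (hs.comp hq),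
    contDiff_const.mul hρ0, fun z => mul_nonneg (inv_nonneg.2 hpos.le) (hρ0n z),
    fun z hz => by simp [hρ0z z hz], fun z hz => ?_, fun z v => ?_, ?_⟩
  · simp only [s]; rw [Real.smoothTransition.zero_of_nonpos (by nlinarith)]; simp
  · have h1 : HasFDerivAt (fun z : Euc d => 1 - ‖z‖ ^ 2) (-(2 • (innerSL ℝ z))) z := by
      have := (hasStrictFDerivAt_norm_sq z).hasFDerivAt
      simpa using this.const_sub 1
    have h2 : HasDerivAt s (deriv s (1 - ‖z‖^2)) (1 - ‖z‖^2) := 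
      ((hs.differentiable (by simp)) _).hasDerivAt
    have h3 := (h2.comp_hasFDerivAt z h1).const_mul I⁻¹
    have h4 : fderiv ℝ (fun z : Euc d => I⁻¹ * s (1 - ‖z‖ ^ 2)) z = _ := h3.fderiv
    rw [h4]
    simp [ρ0]; ring
  · rw [integral_const_mul]; exact inv_mul_cancel₀ hpos.ne'

lemma chain_pair {d : ℕ} {U s : Set (Euc d)} (hU : IsOpen U) (hs : IsPreconnected s) (hsU : s ⊆ U) 
    {x y : Euc d} (hx : x ∈ s) (hy : y ∈ s) :
    ∃ L : ℝ, 0 ≤ L ∧ ∃ K' : Set (Euc d), IsCompact K' ∧ K' ⊆ U ∧ ∀ (F : Euc d → ℝ) (g : ℝ),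
      0 ≤ g → Differentiable ℝ F → (∀ z ∈ K', ‖fderiv ℝ F z‖ ≤ g) → |F x - F y| ≤ L * g := by
  refine hs.induction₂ (fun x y => ∃ L : ℝ, 0 ≤ L ∧ ∃ K' : Set (Euc d), IsCompact K' ∧ K' ⊆ U ∧ 
    ∀ (F : Euc d → ℝ) (g : ℝ),
      0 ≤ g → Differentiable ℝ F → (∀ z ∈ K', ‖fderiv ℝ F z‖ ≤ g) → |F x - F y| ≤ L * g) 
      ?_ ?_ ?_ hx hy
  · intro x hx
    obtain ⟨r, hr, hball⟩ := Metric.nhds_basis_closedBall.mem_iff.1 (hU.mem_nhds (hsU hx))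
    filter_upwards [mem_nhdsWithin_of_mem_nhds (Metric.closedBall_mem_nhds x hr)] with y hy
    refine ⟨r, hr.le, _, isCompact_closedBall x r, hball, fun F g hg hF hFg => ?_⟩
    have := (convex_closedBall x r).norm_image_sub_le_of_norm_fderiv_le (𝕜 := ℝ) 
      (fun z _ => hF z) hFg hy (Metric.mem_closedBall_self hr.le)
    rw [Real.norm_eq_abs] at this
    refine this.trans ?_
    rw [mul_comm]
    gcongr
    rw [← dist_eq_norm, dist_comm]; exact hy
  · rintro x y z - - - ⟨L1, hL1, K1, hK1, hK1U, h1⟩ ⟨L2, hL2, K2, hK2, hK2U, h2⟩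
    refine ⟨L1 + L2, by positivity, K1 ∪ K2, hK1.union hK2, union_subset hK1U hK2U, 
      fun F g hg hF hFg => ?_⟩
    have a := h1 F g hg hF (fun z hz => hFg z (Or.inl hz))
    have b := h2 F g hg hF (fun z hz => hFg z (Or.inr hz))
    have := abs_sub_le (F x) (F y) (F z)
    linarith
  · rintro x y - - ⟨L1, hL1, K1, hK1, hK1U, h1⟩
    refine ⟨L1, hL1, K1, hK1, hK1U, fun F g hg hF hFg => ?_⟩
    rw [abs_sub_comm]; exact h1 F g hg hF hFg

lemma chain_compact {d : ℕ} {U s C : Set (Euc d)} (hU : IsOpen U) (hs : IsPreconnected s) 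
    (hsU : s ⊆ U) (hC : IsCompact C) (hCs : C ⊆ s)
    {x : Euc d} (hx : x ∈ s) :
    ∃ L : ℝ, 0 ≤ L ∧ ∃ K' : Set (Euc d), IsCompact K' ∧ K' ⊆ U ∧ ∀ (F : Euc d → ℝ) (g : ℝ),
      0 ≤ g → Differentiable ℝ F → (∀ z ∈ K', ‖fderiv ℝ F z‖ ≤ g) → 
        ∀ y ∈ C, |F x - F y| ≤ L * g := by
  refine hC.induction_on (p := fun C => ∃ L : ℝ, 0 ≤ L ∧ ∃ K' : Set (Euc d), IsCompact K' ∧ K' ⊆ U ∧ 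
    ∀ (F : Euc d → ℝ) (g : ℝ), 0 ≤ g → Differentiable ℝ F → (∀ z ∈ K', ‖fderiv ℝ F z‖ ≤ g) → 
        ∀ y ∈ C, |F x - F y| ≤ L * g) ?_ ?_ ?_ ?_
  · exact ⟨0, le_rfl, ∅, isCompact_empty, empty_subset _, by simp⟩
  · rintro A B hAB ⟨L, hL, K', h1, h2, h3⟩
    exact ⟨L, hL, K', h1, h2, fun F g hg hF hFg y hy => h3 F g hg hF hFg y (hAB hy)⟩
  · rintro A B ⟨L1, hL1, K1, hK1, hK1U, h1⟩ ⟨L2, hL2, K2, hK2, hK2U, h2⟩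
    refine ⟨L1 + L2, by positivity, K1 ∪ K2, hK1.union hK2, union_subset hK1U hK2U, 
      fun F g hg hF hFg y hy => ?_⟩
    have e1 := mul_nonneg hL1 hg
    have e2 := mul_nonneg hL2 hg
    rcases hy with hy | hy
    · have a := h1 F g hg hF (fun z hz => hFg z (Or.inl hz)) y hy
      linarith
    · have b := h2 F g hg hF (fun z hz => hFg z (Or.inr hz)) y hy
      linarith
  · intro y hy
    obtain ⟨r, hr, hball⟩ := Metric.nhds_basis_closedBall.mem_iff.1 (hU.mem_nhds (hsU (hCs hy)))
    obtain ⟨L, hL, K', hK', hKU, h⟩ := chain_pair hU hs hsU hx (hCs hy)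
    refine ⟨_, mem_nhdsWithin_of_mem_nhds (Metric.closedBall_mem_nhds y hr), L + r, by positivity,
      K' ∪ Metric.closedBall y r, hK'.union (isCompact_closedBall y r), union_subset hKU hball, 
      fun F g hg hF hFg z hz => ?_⟩
    have a := h F g hg hF (fun z hz => hFg z (Or.inl hz))
    have := (convex_closedBall y r).norm_image_sub_le_of_norm_fderiv_le (𝕜 := ℝ) 
      (fun z _ => hF z) (fun z hz => hFg z (Or.inr hz)) hz (Metric.mem_closedBall_self hr.le)
    rw [Real.norm_eq_abs] at this
    have h5 : g * ‖y - z‖ ≤ g * r := by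
      gcongr
      rw [← dist_eq_norm, dist_comm]; exact hz
    have := abs_sub_le (F x) (F y) (F z)
    linarith

/-- The scaled kernel. -/
def scaledKer {d : ℕ} (ρ : Euc d → ℝ) (r : ℝ) (x : Euc d) : ℝ := (r ^ d)⁻¹ * ρ (r⁻¹ • x)

/-- The mollified function. -/
def moll {d : ℕ} (ρ φ : Euc d → ℝ) (r : ℝ) (y : Euc d) : ℝ := ∫ t, φ t * scaledKer ρ r (y - t)

lemma scaledKer_zero {d : ℕ} {ρ : Euc d → ℝ} (hρz : ∀ z, 1 ≤ ‖z‖ → ρ z = 0) {r : ℝ} (hr : 0 < r)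
    {x : Euc d} (hx : r ≤ ‖x‖) : scaledKer ρ r x = 0 := by
  unfold scaledKer
  rw [hρz, mul_zero]
  rw [norm_smul, norm_inv, Real.norm_of_nonneg hr.le]
  rw [le_inv_mul_iff₀ hr]; simpa using hx

lemma hasFDerivAt_scaledKer {d : ℕ} {ρ : Euc d → ℝ} (hρ : Differentiable ℝ ρ) {r : ℝ} (hr : 0 < r)
    (x : Euc d) (u : ℝ) (v : Euc d) :
    fderiv ℝ (↿(scaledKer ρ)) (r, x) (u, v) = 
      (r ^ d)⁻¹ * fderiv ℝ ρ (r⁻¹ • x) (r⁻¹ • v) 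
      - u * r⁻¹ * (r ^ d)⁻¹ * (d * ρ (r⁻¹ • x) + fderiv ℝ ρ (r⁻¹ • x) (r⁻¹ • x)) := by
  have h1 : HasFDerivAt (fun q : ℝ × Euc d => q.1) (ContinuousLinearMap.fst ℝ ℝ (Euc d)) (r, x) := 
    hasFDerivAt_fst
  have h2 : HasFDerivAt (fun q : ℝ × Euc d => q.2) (ContinuousLinearMap.snd ℝ ℝ (Euc d)) (r, x) := 
    hasFDerivAt_snd
  have h3 := (hasDerivAt_inv hr.ne').comp_hasFDerivAt (r, x) h1
  have h4 := h3.smul h2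
  have h5 := (hρ (r⁻¹ • x)).hasFDerivAt.comp (r, x) h4
  have h6 : HasDerivAt (fun r : ℝ => (r ^ d)⁻¹) (-(d * r⁻¹ * (r ^ d)⁻¹)) r := by
    have := (hasDerivAt_pow d r).inv (pow_ne_zero d hr.ne')
    have e : -(d * r⁻¹ * (r ^ d)⁻¹) = -((d : ℝ) * r ^ (d - 1)) / (r ^ d) ^ 2 := by
      clear this h5 h4 h3 h2 h1
      rcases d with _ | d
      · simp
      · simp only [Nat.add_sub_cancel]
        field_simp
        ring
    rw [e]
    exact this
  have h7 := h6.comp_hasFDerivAt (r, x) h1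
  have h8 := h7.mul h5
  have h9 : fderiv ℝ (↿(scaledKer ρ)) (r, x) = _ := h8.fderiv
  rw [h9]
  simp
  field_simp
  ring

lemma contDiffOn_scaledKer {d : ℕ} {ρ : Euc d → ℝ} (hρ : ContDiff ℝ (⊤ : ℕ∞) ρ) :
    ContDiffOn ℝ 1 (↿(scaledKer ρ)) (Ioi (0:ℝ) ×ˢ univ) := by
  have h1 : ContDiffOn ℝ 1 (fun q : ℝ × Euc d => q.1) (Ioi (0:ℝ) ×ˢ univ) := contDiff_fst.contDiffOn
  have h0 : ∀ q ∈ (Ioi (0:ℝ) ×ˢ univ : Set (ℝ × Euc d)), q.1 ≠ 0 := fun q hq => (ne_of_gt hq.1)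
  have h2 : ContDiffOn ℝ 1 (fun q : ℝ × Euc d => q.1⁻¹ • q.2) (Ioi (0:ℝ) ×ˢ univ) := 
    (h1.inv h0).smul contDiff_snd.contDiffOn
  have h3 : ContDiffOn ℝ 1 (fun q : ℝ × Euc d => (q.1 ^ d)⁻¹) (Ioi (0:ℝ) ×ˢ univ) := 
    (h1.pow d).inv (fun q hq => pow_ne_zero _ (h0 q hq))
  have hρ1 : ContDiff ℝ 1 ρ := hρ.of_le (by exact_mod_cast le_top)
  exact h3.mul (hρ1.comp_contDiffOn h2)

lemma hasFDerivAt_moll {d : ℕ} {ρ φ : Euc d → ℝ} (hρ : ContDiff ℝ (⊤ : ℕ∞) ρ) 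
    (hρz : ∀ z, 1 ≤ ‖z‖ → ρ z = 0) (hφ : Continuous φ) {r : ℝ} (hr : 0 < r) (y : Euc d) :
    ∃ A : ℝ × Euc d →L[ℝ] ℝ, HasFDerivAt (fun q : ℝ × Euc d => moll ρ φ q.1 q.2) A (r, y) ∧
      ∀ q, A q = ∫ t, φ t * fderiv ℝ (↿(scaledKer ρ)) (r, y - t) q := by
  have hφl : LocallyIntegrable φ volume := hφ.locallyIntegrable
  have hsub : Ioo (0:ℝ) (2 * r) ×ˢ (univ : Set (Euc d)) ⊆ Ioi (0:ℝ) ×ˢ univ := 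
    prod_mono Ioo_subset_Ioi_self subset_rfl
  have hrm : r ∈ Ioo (0:ℝ) (2 * r) := ⟨hr, by linarith⟩
  have h0 : ∀ p, ∀ x : Euc d, p ∈ Ioo (0:ℝ) (2 * r) → x ∉ Metric.closedBall (0 : Euc d) (2 * r) → 
      scaledKer ρ p x = 0 := by
    intro p x hp hx
    apply scaledKer_zero hρz hp.1
    simp at hx
    linarith [hp.2]
  have h := hasFDerivAt_convolution_right_with_param (ContinuousLinearMap.mul ℝ ℝ) (μ := volume)
    (g := scaledKer ρ)
    (s := Ioo (0:ℝ) (2 * r)) isOpen_Ioo (isCompact_closedBall (0 : Euc d) (2 * r)) 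
    h0 hφl ((contDiffOn_scaledKer hρ).mono hsub) (r, y) hrm
  refine ⟨_, h, fun q => ?_⟩
  have hopen : IsOpen (Ioo (0:ℝ) (2 * r) ×ˢ (univ : Set (Euc d))) := isOpen_Ioo.prod isOpen_univ
  rw [convolution_precompR_apply]
  · rfl
  · exact hφl
  · apply HasCompactSupport.intro (isCompact_closedBall (0 : Euc d) (2 * r))
    intro x hx
    have : (↿(scaledKer ρ)) =ᶠ[𝓝 ((r, x) : ℝ × Euc d)] fun _ => 0 := by
      have hm : Ioo (0:ℝ) (2 * r) ×ˢ (Metric.closedBall (0 : Euc d) (2 * r))ᶜ ∈ 𝓝 ((r, x) : ℝ × Euc d) :=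
        prod_mem_nhds (isOpen_Ioo.mem_nhds hrm) (Metric.isClosed_closedBall.isOpen_compl.mem_nhds hx)
      filter_upwards [hm] with q hq
      exact h0 _ _ hq.1 hq.2
    show fderiv ℝ (↿(scaledKer ρ)) (r, x) = 0
    rw [this.fderiv_eq]; simp
  · have := (((contDiffOn_scaledKer hρ).mono hsub).continuousOn_fderiv_of_isOpen hopen le_rfl)
    exact this.comp_continuous (Continuous.prodMk_right _) (fun x => ⟨hrm, mem_univ _⟩)

lemma tendsto_moll {d : ℕ} {ρ φ : Euc d → ℝ} (hρ0 : ∀ z, 0 ≤ ρ z)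
    (hρz : ∀ z, 1 ≤ ‖z‖ → ρ z = 0) (hρ1 : ∫ z, ρ z = 1) (hφ : Continuous φ) (y : Euc d) :
    Tendsto (fun r => moll ρ φ r y) (𝓝[>] 0) (𝓝 (φ y)) := by
  have h := convolution_tendsto_right (μ := (volume : Measure (Euc d))) (g := fun _ : ℝ => φ) (l := 𝓝[>] (0:ℝ)) 
    (x₀ := y) (z₀ := φ y) (φ := fun r x => scaledKer ρ r x) (k := fun _ => y) ?_ ?_ ?_ ?_ ?_ ?_
  · refine h.congr (fun r => ?_)
    rw [convolution_def]
    unfold moll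
    rw [← integral_sub_left_eq_self _ _ y]
    simp [mul_comm]
  · filter_upwards [self_mem_nhdsWithin] with r hr x
    have hr : 0 < r := hr
    exact mul_nonneg (by positivity) (hρ0 _)
  · filter_upwards [self_mem_nhdsWithin] with r hr
    have hr : 0 < r := hr
    unfold scaledKer
    rw [integral_const_mul, Measure.integral_comp_smul]
    simp [hρ1, abs_of_pos hr, hr.ne']
  · rw [tendsto_smallSets_iff]
    intro t ht
    obtain ⟨e, he, hball⟩ := Metric.mem_nhds_iff.1 ht
    filter_upwards [Ioo_mem_nhdsGT he] with r hr x hx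
    apply hball
    by_contra hcon
    simp at hcon
    exact hx (scaledKer_zero hρz hr.1 (hr.2.le.trans hcon))
  · exact Eventually.of_forall fun _ => hφ.aestronglyMeasurable
  · exact (hφ.tendsto y).comp tendsto_snd
  · exact tendsto_const_nhds

lemma abs_integral_ball_le {d : ℕ} {f : Euc d → ℝ} {y : Euc d} {r C : ℝ} (hr : 0 < r)
    (h1 : ∀ t ∈ Metric.ball y r, |f t| ≤ C) (h2 : ∀ t, t ∉ Metric.ball y r → f t = 0) :
    |∫ t, f t| ≤ C * (r ^ d * (volume (Metric.ball (0 : Euc d) 1)).toReal) := by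
  rw [← setIntegral_eq_integral_of_forall_compl_eq_zero h2]
  have := norm_setIntegral_le_of_norm_le_const (μ := volume) (f := f) 
    (s := Metric.ball y r) (C := C) measure_ball_lt_top (by simpa using h1)
  rw [Real.norm_eq_abs] at this
  refine this.trans (le_of_eq ?_)
  rw [Measure.real, Measure.addHaar_ball_of_pos _ _ hr, ENNReal.toReal_mul, ENNReal.toReal_ofReal (by positivity)]
  simp

lemma moll_approx {d : ℕ} {χ ρ : Euc d → ℝ}
    (hχ : ContDiff ℝ (⊤ : ℕ∞) χ) (hρ : ContDiff ℝ (⊤ : ℕ∞) ρ) (hρ0 : ∀ z, 0 ≤ ρ z)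
    (hρz : ∀ z, 1 ≤ ‖z‖ → ρ z = 0) (hχz : ∀ z, 1 ≤ ‖z‖ → χ z = 0)
    (hχρ : ∀ z v, fderiv ℝ χ z v = - (ρ z * inner ℝ z v)) (hρ1 : ∫ z, ρ z = 1)
    {Φ : Euc d → ℝ} (hΦ : ContDiff ℝ (⊤ : ℕ∞) Φ) {B0 : Set (Euc d)} (hB0 : IsCompact B0) :
    ∃ C : ℝ, 0 ≤ C ∧ ∀ (φ : Euc d → ℝ) (M ε θ : ℝ), Continuous φ → (∀ x, |φ x| ≤ M) → 0 < ε → 0 ≤ θ →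
      (∀ ψ : Euc d → ℝ, ContDiff ℝ (⊤ : ℕ∞) ψ → HasCompactSupport ψ → 
        |(∫ x, φ x * ∑ j, fderiv ℝ (fun y => fderiv ℝ ψ y (EuclideanSpace.single j 1)) x 
            (EuclideanSpace.single j 1)) + 
          ε⁻¹ * ∫ x, φ x * ∑ j, fderiv ℝ (fun y => ψ y * fderiv ℝ Φ y (EuclideanSpace.single j 1)) x 
            (EuclideanSpace.single j 1)| ≤ θ * ∫ x, |ψ x|) →
      ∀ r ∈ Ioc (0:ℝ) 1, ∀ y ∈ B0, |φ y - moll ρ φ r y| ≤ C * r * (M / ε + θ) := by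
  classical
  have hχc : HasCompactSupport χ := HasCompactSupport.intro (isCompact_closedBall (0 : Euc d) 1) 
    fun x hx => hχz x (by simp at hx; exact hx.le)
  have hρc : HasCompactSupport ρ := HasCompactSupport.intro (isCompact_closedBall (0 : Euc d) 1) 
    fun x hx => hρz x (by simp at hx; exact hx.le)
  obtain ⟨Cχ, hCχ⟩ := hχc.exists_bound_of_continuous hχ.continuous
  obtain ⟨Cρ, hCρ⟩ := hρc.exists_bound_of_continuous hρ.continuous
  have hCχ0 : 0 ≤ Cχ := (norm_nonneg _).trans (hCχ 0)
  have hCρ0 : 0 ≤ Cρ := (norm_nonneg _).trans (hCρ 0)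
  have hdΦ : ∀ j : Fin d, ContDiff ℝ (⊤ : ℕ∞) (fun y => fderiv ℝ Φ y (EuclideanSpace.single j 1)) := by
    intro j
    exact (hΦ.fderiv_right (by exact_mod_cast le_rfl)).clm_apply contDiff_const
  have hddΦ : ∀ j : Fin d, Continuous (fun x => fderiv ℝ (fun y => fderiv ℝ Φ y (EuclideanSpace.single j 1)) x 
      (EuclideanSpace.single j 1)) := by
    intro j
    exact ((hdΦ j).continuous_fderiv (by simp)).clm_apply continuous_const
  have hB1 : IsCompact (Metric.cthickening 1 B0) := hB0.cthickening
  obtain ⟨C1, hC1⟩ : ∃ C1 : ℝ, ∀ x ∈ Metric.cthickening 1 B0, ∀ j : Fin d, 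
      |fderiv ℝ Φ x (EuclideanSpace.single j 1)| ≤ C1 ∧ 
      |fderiv ℝ (fun y => fderiv ℝ Φ y (EuclideanSpace.single j 1)) x (EuclideanSpace.single j 1)| ≤ C1 := by
    have := fun j => hB1.exists_bound_of_continuousOn (hdΦ j).continuous.continuousOn
    choose a ha using this
    have := fun j => hB1.exists_bound_of_continuousOn (hddΦ j).continuousOn
    choose b hb using this
    refine ⟨∑ j, (|a j| + |b j|), fun x hx j => ?_⟩
    have h3 : |a j| + |b j| ≤ ∑ j, (|a j| + |b j|) := 
      Finset.single_le_sum (f := fun j => |a j| + |b j|) (fun i _ => by positivity) (Finset.mem_univ j)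
    have h1 := ha j x hx
    have h2 := hb j x hx
    rw [Real.norm_eq_abs] at h1 h2
    have := le_abs_self (a j)
    have := le_abs_self (b j)
    have := abs_nonneg (a j)
    have := abs_nonneg (b j)
    constructor <;> linarith
  set v1 := (volume (Metric.ball (0 : Euc d) 1)).toReal
  have hv1 : 0 ≤ v1 := ENNReal.toReal_nonneg
  set C2 := d * (Cρ * |C1| + Cχ * |C1|)
  refine ⟨C2 * v1 + Cχ * v1, by positivity, ?_⟩
  intro φ M ε θ hφ hM hε hθ hVW r hr y hy
  have hM0 : 0 ≤ M := (abs_nonneg _).trans (hM 0)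
  have hder : ∀ s ∈ Ioc (0:ℝ) 1, ∃ D : ℝ, HasDerivAt (fun s => moll ρ φ s y) D s ∧ 
      |D| ≤ (C2 * v1 + Cχ * v1) * (M / ε + θ) := by
    intro s hs
    have hs0 : 0 < s := hs.1
    obtain ⟨A, hA, hAq⟩ := hasFDerivAt_moll hρ hρz hφ hs0 y
    have hD : HasDerivAt (fun s => moll ρ φ s y) (A (1, 0)) s := by
      have h1 : HasDerivAt (fun s : ℝ => (s, y)) ((1, 0) : ℝ × Euc d) s := 
        (hasDerivAt_id s).prodMk (hasDerivAt_const s y)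
      exact hA.comp_hasDerivAt s h1
    refine ⟨_, hD, ?_⟩
    rw [hAq]
    set ψ : Euc d → ℝ := fun t => χ (s⁻¹ • (y - t)) with hψdef
    have hin : ∀ t, HasFDerivAt (fun t : Euc d => s⁻¹ • (y - t)) (-(s⁻¹ • ContinuousLinearMap.id ℝ (Euc d))) t := by
      intro t
      have := ((hasFDerivAt_id (𝕜 := ℝ) t).const_sub y).const_smul s⁻¹
      have e : -(s⁻¹ • ContinuousLinearMap.id ℝ (Euc d)) = s⁻¹ • -ContinuousLinearMap.id ℝ (Euc d) := by
        simp
      rw [e]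
      exact this
    have hnin : ContDiff ℝ (⊤ : ℕ∞) (fun t : Euc d => s⁻¹ • (y - t)) := 
      by fun_prop
    have hψ : ContDiff ℝ (⊤ : ℕ∞) ψ := hχ.comp hnin
    have hnb : ∀ t, t ∉ Metric.ball y s → 1 ≤ ‖s⁻¹ • (y - t)‖ := by
      intro t ht
      rw [norm_smul, norm_inv, Real.norm_of_nonneg hs0.le, le_inv_mul_iff₀ hs0, mul_one,
        ← dist_eq_norm, dist_comm]
      simpa using ht
    have hψz : ∀ t, t ∉ Metric.ball y s → ψ t = 0 := fun t ht => hχz _ (hnb t ht)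
    have hψc : HasCompactSupport ψ := HasCompactSupport.intro (isCompact_closedBall y s)
      fun x hx => hψz x (fun h => hx (Metric.ball_subset_closedBall h))
    have hψ1 : ∀ t v, fderiv ℝ ψ t v = s⁻¹ * (ρ (s⁻¹ • (y - t)) * inner ℝ (s⁻¹ • (y - t)) v) := by
      intro t v
      have h := ((hχ.differentiable (by simp)) (s⁻¹ • (y - t))).hasFDerivAt.comp t (hin t)
      have h' : fderiv ℝ ψ t = _ := h.fderiv
      rw [h']
      simp [hχρ]
    have hψ2 : ∀ t (v : Euc d), fderiv ℝ (fun t => fderiv ℝ ψ t v) t v = 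
        - (s⁻¹ * s⁻¹) * (fderiv ℝ ρ (s⁻¹ • (y - t)) v * inner ℝ (s⁻¹ • (y - t)) v + 
          ρ (s⁻¹ • (y - t)) * inner ℝ v v) := by
      intro t v
      have h1 := ((hρ.differentiable (by simp)) (s⁻¹ • (y - t))).hasFDerivAt.comp t (hin t)
      have h2 := (hin t).inner ℝ (hasFDerivAt_const v t)
      have h3 := (h1.mul h2).const_mul s⁻¹
      have h4 : (fun t => fderiv ℝ ψ t v) = fun t => s⁻¹ * (ρ (s⁻¹ • (y - t)) * inner ℝ (s⁻¹ • (y - t)) v) := 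
        funext fun t => hψ1 t v
      rw [h4]
      have h' : fderiv ℝ (fun t => s⁻¹ * (ρ (s⁻¹ • (y - t)) * inner ℝ (s⁻¹ • (y - t)) v)) t = _ := h3.fderiv
      rw [h']
      simp [inner_neg_left, inner_smul_left]
      ring
    have hlap : ∀ t, fderiv ℝ (↿(scaledKer ρ)) (s, y - t) (1, 0) = 
        (s * (s ^ d)⁻¹) * ∑ j, fderiv ℝ (fun y => fderiv ℝ ψ y (EuclideanSpace.single j 1)) t 
            (EuclideanSpace.single j 1) := by
      intro t
      rw [hasFDerivAt_scaledKer (hρ.differentiable (by simp)) hs0]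
      simp_rw [hψ2]
      rw [← Finset.mul_sum, Finset.sum_add_distrib, ← Finset.mul_sum]
      have hz : ∑ j, fderiv ℝ ρ (s⁻¹ • (y - t)) (EuclideanSpace.single j 1) * 
          inner ℝ (s⁻¹ • (y - t)) (EuclideanSpace.single j (1:ℝ)) = 
          fderiv ℝ ρ (s⁻¹ • (y - t)) (s⁻¹ • (y - t)) := by
        set z := s⁻¹ • (y - t)
        have hzz : z = ∑ j, (z j) • (EuclideanSpace.single j (1:ℝ)) := by
          have := ((EuclideanSpace.basisFun (Fin d) ℝ).sum_repr z).symm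
          simpa using this
        have h2 := congrArg (fderiv ℝ ρ z) hzz
        rw [map_sum] at h2
        rw [h2]
        refine Finset.sum_congr rfl fun j _ => ?_
        rw [EuclideanSpace.inner_single_right]
        simp [mul_comm]
      rw [hz]
      simp
      field_simp
      ring
    have hint : ∫ t, φ t * fderiv ℝ (↿(scaledKer ρ)) (s, y - t) (1, 0) = (s * (s ^ d)⁻¹) * 
        ∫ t, φ t * ∑ j, fderiv ℝ (fun y => fderiv ℝ ψ y (EuclideanSpace.single j 1)) t 
            (EuclideanSpace.single j 1) := by
      rw [← integral_const_mul]
      congr 1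
      ext t
      rw [hlap]; ring
    rw [hint]
    have hmain := hVW ψ hψ hψc
    have hθb : ∫ x, |ψ x| ≤ Cχ * (s ^ d * v1) := by
      refine (le_abs_self _).trans (abs_integral_ball_le (y := y) hs0 ?_ ?_)
      · intro t _
        rw [abs_abs]; exact hCχ _
      · intro t ht; rw [hψz t ht, abs_zero]
    have hsec : |∫ x, φ x * ∑ j, fderiv ℝ (fun y => ψ y * fderiv ℝ Φ y (EuclideanSpace.single j 1)) x 
            (EuclideanSpace.single j 1)| ≤ (M * (C2 * s⁻¹)) * (s ^ d * v1) := by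
      have hprod : ∀ (t : Euc d) (j : Fin d), fderiv ℝ (fun y => ψ y * fderiv ℝ Φ y (EuclideanSpace.single j 1)) t 
            (EuclideanSpace.single j 1) = ψ t * fderiv ℝ (fun y => fderiv ℝ Φ y (EuclideanSpace.single j 1)) t 
            (EuclideanSpace.single j 1) + fderiv ℝ Φ t (EuclideanSpace.single j 1) * 
              (s⁻¹ * (ρ (s⁻¹ • (y - t)) * inner ℝ (s⁻¹ • (y - t)) (EuclideanSpace.single j (1:ℝ)))) := by
        intro t j
        have h1 := ((hψ.differentiable (by simp)) t).hasFDerivAt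
        have h2 := (((hdΦ j).differentiable (by simp)) t).hasFDerivAt
        have h3 : fderiv ℝ (fun y => ψ y * fderiv ℝ Φ y (EuclideanSpace.single j 1)) t = _ := (h1.mul h2).fderiv
        rw [h3, ← hψ1]
        simp
      apply abs_integral_ball_le (y := y) hs0
      · intro t ht
        have htB : t ∈ Metric.cthickening 1 B0 := 
          Metric.mem_cthickening_of_dist_le t y 1 B0 hy ((le_of_lt ht).trans hs.2)
        rw [abs_mul]
        refine mul_le_mul (hM t) ?_ (abs_nonneg _) hM0
        refine (Finset.abs_sum_le_sum_abs _ _).trans ?_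
        have : ∀ j ∈ (Finset.univ : Finset (Fin d)), |fderiv ℝ (fun y => ψ y * fderiv ℝ Φ y (EuclideanSpace.single j 1)) t 
            (EuclideanSpace.single j 1)| ≤ (Cρ * |C1| + Cχ * |C1|) * s⁻¹ := by
          intro j _
          rw [hprod]
          obtain ⟨ha, hb⟩ := hC1 t htB j
          replace ha := ha.trans (le_abs_self C1)
          replace hb := hb.trans (le_abs_self C1)
          have hs1 : 1 ≤ s⁻¹ := (one_le_inv₀ hs0).2 hs.2
          refine (abs_add_le _ _).trans ?_
          have e1 : |ψ t * fderiv ℝ (fun y => fderiv ℝ Φ y (EuclideanSpace.single j 1)) t 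
            (EuclideanSpace.single j 1)| ≤ Cχ * |C1| * s⁻¹ := by
            rw [abs_mul]
            calc _ ≤ Cχ * |C1| := mul_le_mul (hCχ _) hb (abs_nonneg _) hCχ0
              _ ≤ _ := le_mul_of_one_le_right (by positivity) hs1
          have e2 : |inner ℝ (s⁻¹ • (y - t)) (EuclideanSpace.single j (1:ℝ))| ≤ 1 := by
            refine (abs_real_inner_le_norm _ _).trans ?_
            rw [norm_smul, norm_inv, Real.norm_of_nonneg hs0.le]
            simp only [PiLp.norm_single, norm_one, mul_one]
            rw [inv_mul_le_iff₀ hs0, mul_one, ← dist_eq_norm, dist_comm]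
            exact le_of_lt ht
          have e3 : |fderiv ℝ Φ t (EuclideanSpace.single j 1) * 
              (s⁻¹ * (ρ (s⁻¹ • (y - t)) * inner ℝ (s⁻¹ • (y - t)) (EuclideanSpace.single j (1:ℝ))))| ≤ 
              |C1| * (s⁻¹ * (Cρ * 1)) := by
            rw [abs_mul, abs_mul, abs_mul, abs_of_pos (inv_pos.2 hs0)]
            have := hCρ (s⁻¹ • (y - t))
            rw [Real.norm_eq_abs] at this
            gcongr
          calc _ ≤ _ := add_le_add e1 e3
            _ = _ := by ring
        refine (Finset.sum_le_sum this).trans (le_of_eq ?_)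
        simp [C2]; ring
      · intro t ht
        have : ∀ j ∈ (Finset.univ : Finset (Fin d)), fderiv ℝ (fun y => ψ y * fderiv ℝ Φ y (EuclideanSpace.single j 1)) t 
            (EuclideanSpace.single j 1) = 0 := by
          intro j _
          rw [hprod, hψz t ht, hρz _ (hnb t ht)]; simp
        rw [Finset.sum_eq_zero this, mul_zero]
    set X := ∫ t, φ t * ∑ j, fderiv ℝ (fun y => fderiv ℝ ψ y (EuclideanSpace.single j 1)) t 
            (EuclideanSpace.single j 1)
    set Y := ∫ x, φ x * ∑ j, fderiv ℝ (fun y => ψ y * fderiv ℝ Φ y (EuclideanSpace.single j 1)) x 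
            (EuclideanSpace.single j 1)
    have hX : |X| ≤ θ * (Cχ * (s ^ d * v1)) + ε⁻¹ * ((M * (C2 * s⁻¹)) * (s ^ d * v1)) := by
      have e1 : |X| ≤ |X + ε⁻¹ * Y| + |ε⁻¹ * Y| := by
        have := abs_sub (X + ε⁻¹ * Y) (ε⁻¹ * Y)
        simpa using this
      have e2 : |ε⁻¹ * Y| ≤ ε⁻¹ * ((M * (C2 * s⁻¹)) * (s ^ d * v1)) := by
        rw [abs_mul, abs_of_pos (inv_pos.2 hε)]
        gcongr
      have e3 : θ * ∫ x, |ψ x| ≤ θ * (Cχ * (s ^ d * v1)) := by gcongr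
      linarith
    rw [abs_mul, abs_of_pos (by positivity : 0 < s * (s ^ d)⁻¹)]
    have hC20 : 0 ≤ C2 := by positivity
    calc s * (s ^ d)⁻¹ * |X| ≤ s * (s ^ d)⁻¹ * (θ * (Cχ * (s ^ d * v1)) + ε⁻¹ * ((M * (C2 * s⁻¹)) * (s ^ d * v1))) := by gcongr
      _ = s * (θ * Cχ * v1) + C2 * v1 * (M / ε) := by field_simp
      _ ≤ 1 * (θ * Cχ * v1) + C2 * v1 * (M / ε) := by gcongr; exact hs.2
      _ ≤ (C2 * v1 + Cχ * v1) * (M / ε + θ) := by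
        have a1 : 0 ≤ C2 * v1 * θ := by positivity
        have a2 : 0 ≤ Cχ * v1 * (M / ε) := by positivity
        nlinarith
  have hr0 : 0 < r := hr.1
  set B := (C2 * v1 + Cχ * v1) * (M / ε + θ)
  have hB : 0 ≤ B := by
    have hC20 : 0 ≤ C2 := by positivity
    positivity
  have hdiff : ∀ s ∈ Ioo (0:ℝ) r, |moll ρ φ s y - moll ρ φ r y| ≤ B * r := by
    intro s hs
    have := (convex_Icc s r).norm_image_sub_le_of_norm_deriv_le (f := fun s => moll ρ φ s y) (C := B)
      (fun x hx => (hder x ⟨hs.1.trans_le hx.1, hx.2.trans hr.2⟩).choose_spec.1.differentiableAt)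
      (fun x hx => by
        obtain ⟨D, hD, hDb⟩ := hder x ⟨hs.1.trans_le hx.1, hx.2.trans hr.2⟩
        rw [hD.deriv]; exact hDb) (right_mem_Icc.2 hs.2.le) (left_mem_Icc.2 hs.2.le)
    rw [Real.norm_eq_abs, Real.norm_eq_abs] at this
    refine this.trans ?_
    gcongr
    rw [abs_sub_comm, abs_of_pos (by linarith [hs.2])]
    linarith [hs.1]
  have hlim : Tendsto (fun s => |moll ρ φ s y - moll ρ φ r y|) (𝓝[>] 0) (𝓝 |φ y - moll ρ φ r y|) := 
    ((tendsto_moll hρ0 hρz hρ1 hφ y).sub_const _).abs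
  have hfin := le_of_tendsto hlim (by
    filter_upwards [Ioo_mem_nhdsGT hr0] with s hs
    exact hdiff s hs)
  refine hfin.trans (le_of_eq ?_)
  simp only [B]; ring

lemma locInt_fderiv {d : ℕ} {φ : Euc d → ℝ} 
    (hloc : LocallyIntegrable (fun x => ‖fderiv ℝ φ x‖ ^ 2)) (v : Euc d) :
    LocallyIntegrable (fun x => fderiv ℝ φ x v) := by
  have h1 : LocallyIntegrable (fun x => ‖v‖ * (1 + ‖fderiv ℝ φ x‖ ^ 2)) := by
    have := ((locallyIntegrable_const (μ := (volume : Measure (Euc d))) (1:ℝ)).add hloc).smul ‖v‖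
    exact this
  refine h1.mono (measurable_fderiv_apply_const ℝ φ v).aestronglyMeasurable ?_
  refine Eventually.of_forall fun x => ?_
  have h2 := (fderiv ℝ φ x).le_opNorm v
  rw [Real.norm_of_nonneg (by positivity : 0 ≤ ‖v‖ * (1 + ‖fderiv ℝ φ x‖ ^ 2))]
  refine h2.trans ?_
  rw [mul_comm]
  gcongr
  nlinarith [sq_nonneg (‖fderiv ℝ φ x‖ - 1)]

lemma ibp {d : ℕ} {φ g : Euc d → ℝ} (hφ : Differentiable ℝ φ)
    (hloc : LocallyIntegrable (fun x => ‖fderiv ℝ φ x‖ ^ 2)) (hg : ContDiff ℝ 1 g) 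
    (hgc : HasCompactSupport g) (v : Euc d) :
    Integrable (fun x => fderiv ℝ φ x v * g x) ∧ Integrable (fun x => φ x * fderiv ℝ g x v) ∧ 
    ∫ x, φ x * fderiv ℝ g x v = - ∫ x, fderiv ℝ φ x v * g x := by
  have h1 : Integrable (fun x => fderiv ℝ φ x v * g x) := by
    have := (locInt_fderiv hloc v).integrable_smul_right_of_hasCompactSupport hg.continuous hgc
    exact this
  have hc : HasCompactSupport (fun x => fderiv ℝ g x v) := hgc.fderiv_apply (𝕜 := ℝ) v
  have hcc : Continuous (fun x => fderiv ℝ g x v) := (hg.continuous_fderiv (by simp)).clm_apply continuous_const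
  have h2 : Integrable (fun x => φ x * fderiv ℝ g x v) := 
    (hφ.continuous.mul hcc).integrable_of_hasCompactSupport hc.mul_left
  have h3 : Integrable (fun x => φ x * g x) := 
    (hφ.continuous.mul hg.continuous).integrable_of_hasCompactSupport hgc.mul_left
  exact ⟨h1, h2, integral_mul_fderiv_eq_neg_fderiv_mul_of_integrable h1 h2 h3 (fun x _ => hφ x) 
    (fun x _ => hg.differentiable (by simp) x)⟩

lemma moll_grad {d : ℕ} {ρ : Euc d → ℝ} (hρ : ContDiff ℝ (⊤ : ℕ∞) ρ) 
    (hρz : ∀ z, 1 ≤ ‖z‖ → ρ z = 0) :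
    ∃ C : ℝ, 0 ≤ C ∧ ∀ (φ : Euc d → ℝ), Differentiable ℝ φ → 
      LocallyIntegrable (fun x => ‖fderiv ℝ φ x‖ ^ 2) → ∀ r ∈ Ioc (0:ℝ) 1, 
      Differentiable ℝ (moll ρ φ r) ∧ ∀ (y : Euc d) (t E : ℝ), 0 < t → 
        (∫ x in Metric.ball y r, ‖fderiv ℝ φ x‖ ^ 2) ≤ E → 
        ‖fderiv ℝ (moll ρ φ r) y‖ ≤ C * (r ^ d)⁻¹ * (t * E + t⁻¹) := by
  have hρc : HasCompactSupport ρ := HasCompactSupport.intro (isCompact_closedBall (0 : Euc d) 1) 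
    fun x hx => hρz x (by simp at hx; exact hx.le)
  obtain ⟨Cρ, hCρ⟩ := hρc.exists_bound_of_continuous hρ.continuous
  have hCρ0 : 0 ≤ Cρ := (norm_nonneg _).trans (hCρ 0)
  set v1 := (volume (Metric.ball (0 : Euc d) 1)).toReal
  have hv1 : 0 ≤ v1 := ENNReal.toReal_nonneg
  refine ⟨Cρ * (1 + v1), by positivity, fun φ hφ hloc r hr => ?_⟩
  have hr0 : 0 < r := hr.1
  have hder : ∀ y, ∃ A : Euc d →L[ℝ] ℝ, HasFDerivAt (moll ρ φ r) A y ∧ 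
      ∀ v, A v = ∫ t, φ t * ((r ^ d)⁻¹ * fderiv ℝ ρ (r⁻¹ • (y - t)) (r⁻¹ • v)) := by
    intro y
    obtain ⟨A, hA, hAq⟩ := hasFDerivAt_moll hρ hρz hφ.continuous hr0 y
    refine ⟨A.comp (ContinuousLinearMap.inr ℝ ℝ (Euc d)), ?_, fun v => ?_⟩
    · have h1 : HasFDerivAt (fun y : Euc d => (r, y)) (ContinuousLinearMap.inr ℝ ℝ (Euc d)) y := 
        hasFDerivAt_prodMk_right r y
      exact hA.comp y h1
    · have : A.comp (ContinuousLinearMap.inr ℝ ℝ (Euc d)) v = A (0, v) := by simp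
      rw [this, hAq]
      congr 1; ext t
      rw [hasFDerivAt_scaledKer (hρ.differentiable (by simp)) hr0]
      simp
  refine ⟨fun y => (hder y).choose_spec.1.differentiableAt, fun y t E ht hE => ?_⟩
  have hE0 : 0 ≤ E := le_trans (integral_nonneg fun x => by positivity) hE
  obtain ⟨A, hA, hAv⟩ := hder y
  rw [hA.fderiv]
  refine ContinuousLinearMap.opNorm_le_bound _ (by positivity) fun v => ?_
  rw [hAv]
  set k : Euc d → ℝ := fun x => (r ^ d)⁻¹ * ρ (r⁻¹ • (y - x)) with hk
  have hnin : ContDiff ℝ (⊤ : ℕ∞) (fun t : Euc d => r⁻¹ • (y - t)) := by fun_prop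
  have hksm : ContDiff ℝ 1 k := by
    have : ContDiff ℝ (⊤ : ℕ∞) k := contDiff_const.mul (hρ.comp hnin)
    exact this.of_le (by exact_mod_cast le_top)
  have hkz : ∀ x, x ∉ Metric.ball y r → k x = 0 := by
    intro x hx
    have : k x = scaledKer ρ r (y - x) := rfl
    rw [this]
    apply scaledKer_zero hρz hr0
    rw [← dist_eq_norm, dist_comm]; simpa using hx
  have hkc : HasCompactSupport k := HasCompactSupport.intro (isCompact_closedBall y r)
      fun x hx => hkz x (fun h => hx (Metric.ball_subset_closedBall h))
  have hkd : ∀ x, fderiv ℝ k x v = -((r ^ d)⁻¹ * fderiv ℝ ρ (r⁻¹ • (y - x)) (r⁻¹ • v)) := by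
    intro x
    have hin : HasFDerivAt (fun t : Euc d => r⁻¹ • (y - t)) (r⁻¹ • -ContinuousLinearMap.id ℝ (Euc d)) x := 
      ((hasFDerivAt_id (𝕜 := ℝ) x).const_sub y).const_smul r⁻¹
    have h3 := (((hρ.differentiable (by simp)) (r⁻¹ • (y - x))).hasFDerivAt.comp x hin).const_mul (r ^ d)⁻¹
    have h4 : fderiv ℝ k x = _ := h3.fderiv
    rw [h4]
    simp
  obtain ⟨i1, i2, i3⟩ := ibp hφ hloc hksm hkc v
  have e1 : ∫ x, φ x * ((r ^ d)⁻¹ * fderiv ℝ ρ (r⁻¹ • (y - x)) (r⁻¹ • v)) = ∫ x, fderiv ℝ φ x v * k x := by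
    rw [← neg_inj, ← i3, ← integral_neg]
    congr 1; ext x
    rw [hkd]; ring
  rw [e1]
  have e2 : ∀ x, x ∉ Metric.ball y r → fderiv ℝ φ x v * k x = 0 := fun x hx => by rw [hkz x hx, mul_zero]
  rw [← setIntegral_eq_integral_of_forall_compl_eq_zero e2]
  have hi : IntegrableOn (fun x => ‖fderiv ℝ φ x‖ ^ 2) (Metric.ball y r) := 
    (hloc.integrableOn_isCompact (isCompact_closedBall y r)).mono_set Metric.ball_subset_closedBall
  have hi2 : IntegrableOn (fun x => (Cρ * (r ^ d)⁻¹ * ‖v‖) * (t * ‖fderiv ℝ φ x‖ ^ 2 + t⁻¹)) (Metric.ball y r) := 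
    ((hi.const_mul t).add (integrableOn_const measure_ball_lt_top.ne)).const_mul _
  have e3 : ‖∫ x in Metric.ball y r, fderiv ℝ φ x v * k x‖ ≤ 
      ∫ x in Metric.ball y r, (Cρ * (r ^ d)⁻¹ * ‖v‖) * (t * ‖fderiv ℝ φ x‖ ^ 2 + t⁻¹) := by
    refine norm_integral_le_of_norm_le hi2 (Eventually.of_forall fun x => ?_)
    rw [norm_mul]
    have a1 := (fderiv ℝ φ x).le_opNorm v
    have a2 : ‖k x‖ ≤ (r ^ d)⁻¹ * Cρ := by
      rw [hk, norm_mul, Real.norm_of_nonneg (by positivity : 0 ≤ (r ^ d)⁻¹)]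
      gcongr
      exact hCρ _
    have a3 : ‖fderiv ℝ φ x‖ ≤ t * ‖fderiv ℝ φ x‖ ^ 2 + t⁻¹ := by
      set a := ‖fderiv ℝ φ x‖
      have : t * a ^ 2 + t⁻¹ - a = t⁻¹ * ((t * a - 1/2) ^ 2 + 3/4) := by field_simp; ring
      have : 0 ≤ t⁻¹ * ((t * a - 1/2) ^ 2 + 3/4) := by positivity
      linarith
    calc ‖fderiv ℝ φ x v‖ * ‖k x‖ ≤ (‖fderiv ℝ φ x‖ * ‖v‖) * ((r ^ d)⁻¹ * Cρ) := by gcongr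
      _ ≤ ((t * ‖fderiv ℝ φ x‖ ^ 2 + t⁻¹) * ‖v‖) * ((r ^ d)⁻¹ * Cρ) := by gcongr
      _ = _ := by ring
  refine e3.trans ?_
  rw [integral_const_mul, integral_add (hi.const_mul t) (integrableOn_const measure_ball_lt_top.ne),
    integral_const_mul, setIntegral_const]
  have hvol : volume.real (Metric.ball y r) ≤ v1 := by
    rw [Measure.real, Measure.addHaar_ball_of_pos _ _ hr0, ENNReal.toReal_mul, ENNReal.toReal_ofReal (by positivity)]
    refine mul_le_of_le_one_left hv1 (pow_le_one₀ hr0.le hr.2)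
  have e4 : t * (∫ x in Metric.ball y r, ‖fderiv ℝ φ x‖ ^ 2) + volume.real (Metric.ball y r) • t⁻¹ ≤ 
      (1 + v1) * (t * E + t⁻¹) := by
    have b1 : t * (∫ x in Metric.ball y r, ‖fderiv ℝ φ x‖ ^ 2) ≤ t * E := by gcongr
    have b2 : volume.real (Metric.ball y r) • t⁻¹ ≤ v1 * t⁻¹ := by
      rw [smul_eq_mul]; gcongr
    have b3 : 0 ≤ v1 * (t * E) := by positivity
    have b4 : 0 < t⁻¹ := by positivity
    nlinarith
  calc _ ≤ (Cρ * (r ^ d)⁻¹ * ‖v‖) * ((1 + v1) * (t * E + t⁻¹)) := by gcongr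
    _ = _ := by ring

lemma measurable_gradient' {d : ℕ} (φ : Euc d → ℝ) : Measurable (fun x => gradient φ x) := by
  unfold gradient
  exact (InnerProductSpace.toDual ℝ (Euc d)).symm.continuous.measurable.comp (measurable_fderiv ℝ φ)

lemma weak_eq {d : ℕ} {w : Euc d → ℝ} (hw : Continuous w) (hw0 : ∀ x, 0 ≤ w x) 
    (T : (Euc d → ℝ) → ℝ) {φ ψ : Euc d → ℝ} (hφ : Differentiable ℝ φ) (hψ : Differentiable ℝ ψ)
    (hφi : Integrable (fun x => w x * ‖gradient φ x‖ ^ 2))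
    (hψi : Integrable (fun x => w x * ‖gradient ψ x‖ ^ 2))
    (hT : ∀ t : ℝ, T (fun x => φ x + t * ψ x) = T φ + t * T ψ)
    (hmin : ∀ ψ : Euc d → ℝ, Differentiable ℝ ψ → Integrable (fun x => w x * ‖gradient ψ x‖ ^ 2) → 
      2⁻¹ * (∫ x, w x * ‖gradient φ x‖ ^ 2) - T φ ≤ 2⁻¹ * (∫ x, w x * ‖gradient ψ x‖ ^ 2) - T ψ) :
    ∫ x, w x * inner ℝ (gradient φ x) (gradient ψ x) = T ψ := by
  have hcr : Integrable (fun x => w x * inner ℝ (gradient φ x) (gradient ψ x)) := by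
    refine (hφi.add hψi).mono' ?_ (Eventually.of_forall fun x => ?_)
    · exact (hw.measurable.mul ((measurable_gradient' φ).inner (measurable_gradient' ψ))).aestronglyMeasurable
    · rw [norm_mul, Real.norm_of_nonneg (hw0 x), Pi.add_apply, ← mul_add]
      refine mul_le_mul_of_nonneg_left ?_ (hw0 x)
      refine (abs_real_inner_le_norm _ _).trans ?_
      nlinarith [sq_nonneg (‖gradient φ x‖ - ‖gradient ψ x‖), sq_nonneg (‖gradient φ x‖), sq_nonneg (‖gradient ψ x‖)]
  set b := (∫ x, w x * inner ℝ (gradient φ x) (gradient ψ x)) with hb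
  set c := ∫ x, w x * ‖gradient ψ x‖ ^ 2
  have hc : 0 ≤ c := integral_nonneg fun x => mul_nonneg (hw0 x) (by positivity)
  have key : ∀ t : ℝ, 0 ≤ t * (b - T ψ) + t ^ 2 / 2 * c := by
    intro t
    have hg : ∀ x, gradient (fun x => φ x + t * ψ x) x = gradient φ x + t • gradient ψ x := by
      intro x
      unfold gradient
      have : fderiv ℝ (fun x => φ x + t * ψ x) x = fderiv ℝ φ x + t • fderiv ℝ ψ x := by
        have := ((hφ x).hasFDerivAt.add ((hψ x).hasFDerivAt.const_mul t))
        exact this.fderiv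
      rw [this]; simp
    have hexp : ∀ x, w x * ‖gradient (fun x => φ x + t * ψ x) x‖ ^ 2 = 
        (w x * ‖gradient φ x‖ ^ 2 + (2 * t) * (w x * inner ℝ (gradient φ x) (gradient ψ x))) 
          + t ^ 2 * (w x * ‖gradient ψ x‖ ^ 2) := by
      intro x
      rw [hg, norm_add_sq_real, inner_smul_right, norm_smul, mul_pow, Real.norm_eq_abs, sq_abs]
      ring
    have hi1 : Integrable (fun x => w x * ‖gradient φ x‖ ^ 2 +
        (2 * t) * (w x * inner ℝ (gradient φ x) (gradient ψ x))) :=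
      hφi.add (hcr.const_mul (2 * t))
    have hi2 := hi1.add (hψi.const_mul (t ^ 2))
    have := hmin (fun x => φ x + t * ψ x) (hφ.add (hψ.const_mul t)) (by simp_rw [hexp]; exact hi2)
    rw [hT] at this
    simp_rw [hexp] at this
    rw [integral_add hi1 (hψi.const_mul _), integral_add hφi (hcr.const_mul _), integral_const_mul, 
      integral_const_mul] at this
    linarith
  by_contra hne
  have hbt : b - T ψ ≠ 0 := sub_ne_zero.2 hne
  set B := b - T ψ
  have h1 := key (-(B / (c + 1)))
  have h2 : -(B / (c + 1)) * B + (-(B / (c + 1))) ^ 2 / 2 * c = - (B ^ 2 * (c + 2) / (2 * (c + 1) ^ 2)) := by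
    field_simp
    ring
  rw [h2] at h1
  have h3 : 0 < B ^ 2 := by positivity
  have h4 : 0 < B ^ 2 * (c + 2) / (2 * (c + 1) ^ 2) := by positivity
  linarith

lemma gradient_coord {d : ℕ} (φ : Euc d → ℝ) (x : Euc d) (j : Fin d) :
    (gradient φ x) j = fderiv ℝ φ x (EuclideanSpace.single j 1) := by
  unfold gradient
  have h := InnerProductSpace.toDual_symm_apply (𝕜 := ℝ) (x := EuclideanSpace.single j (1:ℝ)) (y := fderiv ℝ φ x)
  rw [← h, EuclideanSpace.inner_single_right]
  simp

lemma inner_gradient {d : ℕ} (φ ψ : Euc d → ℝ) (x : Euc d) :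
    inner ℝ (gradient φ x) (gradient ψ x) = ∑ j, fderiv ℝ φ x (EuclideanSpace.single j 1) *
      fderiv ℝ ψ x (EuclideanSpace.single j 1) := by
  rw [PiLp.inner_apply]
  refine Finset.sum_congr rfl fun j _ => ?_
  rw [gradient_coord, gradient_coord]
  simp [mul_comm]

lemma norm_gradient' {d : ℕ} (φ : Euc d → ℝ) (x : Euc d) : ‖gradient φ x‖ = ‖fderiv ℝ φ x‖ := by
  unfold gradient
  exact LinearIsometryEquiv.norm_map _ _

lemma locInt_of_weight {d : ℕ} {w φ : Euc d → ℝ} (hw : Continuous w) (hw0 : ∀ x, 0 < w x)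
    (hφi : Integrable (fun x => w x * ‖gradient φ x‖ ^ 2)) :
    LocallyIntegrable (fun x => ‖fderiv ℝ φ x‖ ^ 2) := by
  have h1 := hφi.locallyIntegrable
  have h2 : Continuous (fun x => (w x)⁻¹) := hw.inv₀ fun x => (hw0 x).ne'
  have h3 := (locallyIntegrableOn_univ.2 h1).continuousOn_mul h2.continuousOn isOpen_univ.isLocallyClosed
  rw [locallyIntegrableOn_univ] at h3
  have h4 : (fun x => ‖fderiv ℝ φ x‖ ^ 2) = fun x => (w x)⁻¹ * (w x * ‖gradient φ x‖ ^ 2) := by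
    ext x
    rw [← mul_assoc, inv_mul_cancel₀ (hw0 x).ne', one_mul, norm_gradient']
  rw [h4]; exact h3

lemma vw {d : ℕ} {Φ φ : Euc d → ℝ} (hΦ : ContDiff ℝ (⊤ : ℕ∞) Φ) {ε c θ : ℝ} (hε : 0 < ε) (hc : 0 < c)
    (hφ : Differentiable ℝ φ)
    (hφi : Integrable (fun x => (c⁻¹ * Real.exp (-Φ x / ε)) * ‖gradient φ x‖ ^ 2))
    (T : (Euc d → ℝ) → ℝ)
    (hweak : ∀ ψ : Euc d → ℝ, ContDiff ℝ 1 ψ → HasCompactSupport ψ →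
      ∫ x, (c⁻¹ * Real.exp (-Φ x / ε)) * inner ℝ (gradient φ x) (gradient ψ x) = T ψ)
    (hT : ∀ χ : Euc d → ℝ, ContDiff ℝ (⊤ : ℕ∞) χ → HasCompactSupport χ →
      |T (fun x => Real.exp (Φ x / ε) * χ x)| ≤ θ * ∫ x, |χ x|)
    (χ : Euc d → ℝ) (hχ : ContDiff ℝ (⊤ : ℕ∞) χ) (hχc : HasCompactSupport χ) :
    |(∫ x, φ x * ∑ j, fderiv ℝ (fun y => fderiv ℝ χ y (EuclideanSpace.single j 1)) x (EuclideanSpace.single j 1)) + ε⁻¹ * ∫ x, φ x * ∑ j, fderiv ℝ (fun y => χ y * fderiv ℝ Φ y (EuclideanSpace.single j 1)) x (EuclideanSpace.single j 1)| ≤ (c * θ) * ∫ x, |χ x| := by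
  have hw : Continuous (fun x => c⁻¹ * Real.exp (-Φ x / ε)) := by
    have := hΦ.continuous; fun_prop
  have hloc := locInt_of_weight hw (fun x => by positivity) hφi
  have hdχ : ∀ j : Fin d, ContDiff ℝ 1 (fun y => fderiv ℝ χ y (EuclideanSpace.single j 1)) := fun j =>
    (hχ.fderiv_right (m := 1) (by norm_cast)).clm_apply contDiff_const
  have hdΦ : ∀ j : Fin d, ContDiff ℝ 1 (fun y => χ y * fderiv ℝ Φ y (EuclideanSpace.single j 1)) := fun j =>
    (hχ.of_le (by norm_cast)).mul ((hΦ.fderiv_right (m := 1) (by norm_cast)).clm_apply contDiff_const)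
  have i1 := fun j : Fin d => ibp hφ hloc (hdχ j) (hχc.fderiv_apply ℝ _) (EuclideanSpace.single j 1)
  have i2 := fun j : Fin d => ibp hφ hloc (hdΦ j) hχc.mul_right (EuclideanSpace.single j 1)
  have hψ : ContDiff ℝ 1 (fun x => Real.exp (Φ x / ε) * χ x) :=
    (Real.contDiff_exp.comp ((hΦ.of_le (by norm_cast)).div_const ε)).mul (hχ.of_le (by norm_cast))
  have hwk := hweak _ hψ hχc.mul_left
  have hpt : ∀ x, (c⁻¹ * Real.exp (-Φ x / ε)) * inner ℝ (gradient φ x) (gradient (fun x => Real.exp (Φ x / ε) * χ x) x)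
      = c⁻¹ * (∑ j, (fderiv ℝ φ x (EuclideanSpace.single j 1) * fderiv ℝ χ x (EuclideanSpace.single j 1) +
        ε⁻¹ * (fderiv ℝ φ x (EuclideanSpace.single j 1) * (χ x * fderiv ℝ Φ x (EuclideanSpace.single j 1))))) := by
    intro x
    have hfd : ∀ v, fderiv ℝ (fun x => Real.exp (Φ x / ε) * χ x) x v = Real.exp (Φ x / ε) * (fderiv ℝ χ x v + ε⁻¹ * (χ x * fderiv ℝ Φ x v)) := by
      intro v
      have h1 : HasFDerivAt Φ (fderiv ℝ Φ x) x := (hΦ.differentiable (by simp) x).hasFDerivAt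
      have h2 : HasFDerivAt χ (fderiv ℝ χ x) x := (hχ.differentiable (by simp) x).hasFDerivAt
      have h3 := (((h1.mul_const ε⁻¹).exp).mul h2).fderiv
      have h4 : (fun x => Real.exp (Φ x / ε) * χ x) = (fun x => Real.exp (Φ x * ε⁻¹)) * χ := by
        ext x; simp [div_eq_mul_inv]
      rw [h4, h3]
      simp [div_eq_mul_inv]
      ring
    rw [inner_gradient, mul_assoc, Finset.mul_sum]
    congr 1
    refine Finset.sum_congr rfl fun j _ => ?_
    rw [hfd]
    have : Real.exp (-Φ x / ε) * Real.exp (Φ x / ε) = 1 := by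
      rw [← Real.exp_add]; simp [neg_div]
    linear_combination (fderiv ℝ φ x (EuclideanSpace.single j 1) * (fderiv ℝ χ x (EuclideanSpace.single j 1) + ε⁻¹ * (χ x * fderiv ℝ Φ x (EuclideanSpace.single j 1)))) * this
  simp_rw [hpt] at hwk
  have i3 : ∀ j : Fin d, Integrable (fun x => fderiv ℝ φ x (EuclideanSpace.single j 1) * fderiv ℝ χ x (EuclideanSpace.single j 1) +
        ε⁻¹ * (fderiv ℝ φ x (EuclideanSpace.single j 1) * (χ x * fderiv ℝ Φ x (EuclideanSpace.single j 1)))) :=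
    fun j => (i1 j).1.add ((i2 j).1.const_mul _)
  rw [integral_const_mul, integral_finsetSum _ (fun j _ => i3 j)] at hwk
  have e1 : (∫ x, φ x * ∑ j, fderiv ℝ (fun y => fderiv ℝ χ y (EuclideanSpace.single j 1)) x (EuclideanSpace.single j 1)) = ∑ j, -∫ x, fderiv ℝ φ x (EuclideanSpace.single j 1) * fderiv ℝ χ x (EuclideanSpace.single j 1) := by
    simp_rw [Finset.mul_sum]
    rw [integral_finsetSum _ (fun j _ => (i1 j).2.1)]
    exact Finset.sum_congr rfl fun j _ => (i1 j).2.2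
  have e2 : (∫ x, φ x * ∑ j, fderiv ℝ (fun y => χ y * fderiv ℝ Φ y (EuclideanSpace.single j 1)) x (EuclideanSpace.single j 1)) = ∑ j, -∫ x, fderiv ℝ φ x (EuclideanSpace.single j 1) * (χ x * fderiv ℝ Φ x (EuclideanSpace.single j 1)) := by
    simp_rw [Finset.mul_sum]
    rw [integral_finsetSum _ (fun j _ => (i2 j).2.1)]
    exact Finset.sum_congr rfl fun j _ => (i2 j).2.2
  have e3 : ∀ j : Fin d, (∫ x, (fderiv ℝ φ x (EuclideanSpace.single j 1) * fderiv ℝ χ x (EuclideanSpace.single j 1) +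
        ε⁻¹ * (fderiv ℝ φ x (EuclideanSpace.single j 1) * (χ x * fderiv ℝ Φ x (EuclideanSpace.single j 1))))) = (∫ x, fderiv ℝ φ x (EuclideanSpace.single j 1) * fderiv ℝ χ x (EuclideanSpace.single j 1)) + ε⁻¹ * ∫ x, fderiv ℝ φ x (EuclideanSpace.single j 1) * (χ x * fderiv ℝ Φ x (EuclideanSpace.single j 1)) := by
    intro j
    rw [integral_add (i1 j).1 ((i2 j).1.const_mul _), integral_const_mul]
  simp_rw [e3] at hwk
  rw [Finset.sum_add_distrib, ← Finset.mul_sum] at hwk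
  rw [e1, e2, Finset.sum_neg_distrib, Finset.sum_neg_distrib]
  have hb := hT χ hχ hχc
  rw [← hwk, abs_mul, abs_of_pos (inv_pos.2 hc), inv_mul_le_iff₀ hc] at hb
  rw [mul_neg, ← neg_add, abs_neg, mul_assoc]
  exact hb

structure Pkg {d : ℕ} (Φ φ : Euc d → ℝ) (ε c θ lam M : ℝ) : Prop where
  hε : 0 < ε
  hc : 0 < c
  hθ : 0 ≤ θ
  hM : ∀ x, |φ x| ≤ M
  diff : Differentiable ℝ φ
  int : Integrable (fun x => (c⁻¹ * Real.exp (-Φ x / ε)) * ‖gradient φ x‖ ^ 2)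
  energy : ∫ x, (c⁻¹ * Real.exp (-Φ x / ε)) * ‖gradient φ x‖ ^ 2 = 2 * lam
  vw : ∀ ψ : Euc d → ℝ, ContDiff ℝ (⊤ : ℕ∞) ψ → HasCompactSupport ψ →
    |(∫ x, φ x * ∑ j, fderiv ℝ (fun y => fderiv ℝ ψ y (EuclideanSpace.single j 1)) x (EuclideanSpace.single j 1)) + ε⁻¹ * ∫ x, φ x * ∑ j, fderiv ℝ (fun y => ψ y * fderiv ℝ Φ y (EuclideanSpace.single j 1)) x (EuclideanSpace.single j 1)| ≤ θ * ∫ x, |ψ x|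

lemma Pkg.ball_energy {d : ℕ} {Φ φ : Euc d → ℝ} {ε c θ lam M : ℝ} (P : Pkg Φ φ ε c θ lam M)
    {a r : ℝ} {y : Euc d} (hball : ∀ x ∈ Metric.ball y r, Φ x ≤ a) :
    (∫ x in Metric.ball y r, ‖fderiv ℝ φ x‖ ^ 2) ≤ c * Real.exp (a / ε) * (2 * lam) := by
  have hε := P.hε
  have hc := P.hc
  have h0 : ∀ x, 0 ≤ (c⁻¹ * Real.exp (-Φ x / ε)) * ‖gradient φ x‖ ^ 2 := fun x => by positivity
  calc (∫ x in Metric.ball y r, ‖fderiv ℝ φ x‖ ^ 2)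
      ≤ ∫ x in Metric.ball y r, (c * Real.exp (a / ε)) * ((c⁻¹ * Real.exp (-Φ x / ε)) * ‖gradient φ x‖ ^ 2) := by
        refine integral_mono_of_nonneg (Eventually.of_forall fun x => by positivity)
          (P.int.integrableOn.const_mul _) ?_
        refine (ae_restrict_iff' measurableSet_ball).2 (Eventually.of_forall fun x hx => ?_)
        have h1 : c * Real.exp (a / ε) * (c⁻¹ * Real.exp (-Φ x / ε)) = Real.exp ((a - Φ x) / ε) := by
          rw [sub_div, sub_eq_add_neg, Real.exp_add, ← neg_div]
          field_simp
        beta_reduce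
        rw [← mul_assoc, h1, norm_gradient']
        have h2 : 1 ≤ Real.exp ((a - Φ x) / ε) := Real.one_le_exp (div_nonneg (by linarith [hball x hx]) hε.le)
        exact le_mul_of_one_le_left (by positivity) h2
    _ = (c * Real.exp (a / ε)) * ∫ x in Metric.ball y r, ((c⁻¹ * Real.exp (-Φ x / ε)) * ‖gradient φ x‖ ^ 2) := by
        rw [integral_const_mul]
    _ ≤ (c * Real.exp (a / ε)) * ∫ x, ((c⁻¹ * Real.exp (-Φ x / ε)) * ‖gradient φ x‖ ^ 2) := by
        refine mul_le_mul_of_nonneg_left ?_ (by positivity)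
        exact setIntegral_le_integral P.int (Eventually.of_forall h0)
    _ = _ := by rw [P.energy]

lemma pkg_chain {d : ℕ} (hd : 1 ≤ d) {Φ : Euc d → ℝ} (hΦ : ContDiff ℝ (⊤ : ℕ∞) Φ) {a : ℝ}
    {s C : Set (Euc d)} {x : Euc d} (hs : IsPreconnected s) (hsa : ∀ z ∈ s, Φ z < a)
    (hC : IsCompact C) (hCs : C ⊆ s) (hx : x ∈ s) :
    ∃ C0, 0 ≤ C0 ∧ ∃ R0, 0 < R0 ∧ ∃ a', a' < a ∧ ∀ (φ : Euc d → ℝ) (ε c θ lam M : ℝ),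
      Pkg Φ φ ε c θ lam M → ∀ r t, 0 < r → r ≤ R0 → 0 < t → ∀ y ∈ C,
      |φ x - φ y| ≤ C0 * (r * (M / ε + θ) + (r ^ d)⁻¹ * (t * (c * Real.exp (a' / ε) * (2 * lam)) + t⁻¹)) := by
  obtain ⟨χ, ρ, hχ, hρ, hρ0, hρz, hχz, hχρ, hρ1⟩ := exists_kernel d hd
  have hU : IsOpen {z : Euc d | Φ z < a} := isOpen_lt hΦ.continuous continuous_const
  obtain ⟨L, hL, K', hK', hK'U, hchain⟩ := chain_compact hU hs hsa hC hCs hx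
  obtain ⟨C1, hC1, happ⟩ := moll_approx hχ hρ hρ0 hρz hχz hχρ hρ1 hΦ (hC.insert x)
  obtain ⟨C2, hC2, hgrad⟩ := moll_grad hρ hρz
  obtain ⟨δ, hδ, hδU⟩ := hK'.exists_cthickening_subset_open hU hK'U
  obtain ⟨a', ha', ha'b⟩ : ∃ a' < a, ∀ z ∈ Metric.cthickening δ K', Φ z ≤ a' := by
    rcases (Metric.cthickening δ K').eq_empty_or_nonempty with he | hne
    · exact ⟨a - 1, by linarith, by simp [he]⟩
    · obtain ⟨z, hz, hzm⟩ := (hK'.cthickening (r := δ)).exists_isMaxOn hne hΦ.continuous.continuousOn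
      exact ⟨Φ z, hδU hz, fun w hw => hzm hw⟩
  refine ⟨2 * C1 + L * C2, by positivity, min δ 1, by positivity, a', ha', ?_⟩
  intro φ ε c θ lam M P r t hr hrR ht y hy
  have hrI : r ∈ Ioc (0:ℝ) 1 := ⟨hr, hrR.trans (min_le_right _ _)⟩
  have hloc := locInt_of_weight (by have := hΦ.continuous; fun_prop)
    (fun x => by have := P.hc; positivity) P.int
  obtain ⟨hmd, hmg⟩ := hgrad φ P.diff hloc r hrI
  have hE : 0 ≤ c * Real.exp (a' / ε) * (2 * lam) := by
    rw [← P.energy]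
    have := P.hc
    have : 0 ≤ ∫ x, (c⁻¹ * Real.exp (-Φ x / ε)) * ‖gradient φ x‖ ^ 2 := integral_nonneg fun x => by positivity
    positivity
  have hch := hchain (moll ρ φ r) (C2 * (r ^ d)⁻¹ * (t * (c * Real.exp (a' / ε) * (2 * lam)) + t⁻¹))
    (by positivity) hmd (fun z hz => by
      refine hmg z t _ ht (P.ball_energy fun w hw => ha'b w ?_)
      refine Metric.mem_cthickening_of_dist_le w z δ K' hz ?_
      exact (Metric.mem_ball.1 hw).le.trans (hrR.trans (min_le_left _ _))) y hy
  have ax := happ φ M ε θ P.diff.continuous P.hM P.hε P.hθ P.vw r hrI x (mem_insert _ _)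
  have ay := happ φ M ε θ P.diff.continuous P.hM P.hε P.hθ P.vw r hrI y (mem_insert_of_mem _ hy)
  have hM0 : 0 ≤ M := (abs_nonneg _).trans (P.hM x)
  have hA : 0 ≤ r * (M / ε + θ) := by
    have := P.hε; have := P.hθ; positivity
  have hB : 0 ≤ (r ^ d)⁻¹ * (t * (c * Real.exp (a' / ε) * (2 * lam)) + t⁻¹) := by positivity
  rw [abs_le] at *
  have e1 : 0 ≤ (L * C2) * (r * (M / ε + θ)) := by positivity
  have e2 : 0 ≤ (2 * C1) * ((r ^ d)⁻¹ * (t * (c * Real.exp (a' / ε) * (2 * lam)) + t⁻¹)) := by positivity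
  constructor <;> nlinarith

lemma weak_setup {d : ℕ} {Φ : Euc d → ℝ} (hΦ : ContDiff ℝ (⊤ : ℕ∞) Φ) {V1 V2 : Set (Euc d)}
    (hV1 : IsOpen V1) (hV1n : V1.Nonempty) (hV1c : IsCompact (closure V1)) (hV2c : IsCompact (closure V2))
    (hdisj : Disjoint V1 V2) {ε τ : ℝ} (hτ : 0 < τ) {φ : Euc d → ℝ} (hφ : Differentiable ℝ φ)
    {a1 a2 : ℝ} (ha1 : 0 < a1)
    (hφi : Integrable (fun ξ => (sigma Φ ε ξ / τ) * ‖gradient φ ξ‖^2))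
    (hmin : ∀ ψ : Euc d → ℝ, Differentiable ℝ ψ →
      Integrable (fun ξ => (sigma Φ ε ξ / τ) * ‖gradient ψ ξ‖^2) →
      2⁻¹ * (∫ ξ : Euc d, (sigma Φ ε ξ / τ) * ‖gradient φ ξ‖^2)
        - a1 * (∫ ξ in V1, φ ξ) + a2 * (∫ ξ in V2, φ ξ) ≤
      2⁻¹ * (∫ ξ : Euc d, (sigma Φ ε ξ / τ) * ‖gradient ψ ξ‖^2)
        - a1 * (∫ ξ in V1, ψ ξ) + a2 * (∫ ξ in V2, ψ ξ)) :
    0 < Zpart Φ ε ∧ ∀ ψ : Euc d → ℝ, Differentiable ℝ ψ →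
      Integrable (fun ξ => (sigma Φ ε ξ / τ) * ‖gradient ψ ξ‖^2) →
      ∫ x, (sigma Φ ε x / τ) * inner ℝ (gradient φ x) (gradient ψ x) =
        a1 * (∫ ξ in V1, ψ ξ) - a2 * (∫ ξ in V2, ψ ξ) := by
  have hZ0 : 0 ≤ Zpart Φ ε := integral_nonneg fun x => by positivity
  have hint : ∀ {V : Set (Euc d)} {ψ : Euc d → ℝ}, IsCompact (closure V) → Differentiable ℝ ψ → IntegrableOn ψ V :=
    fun hV hψ => (hψ.continuous.continuousOn.integrableOn_compact hV).mono_set subset_closure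
  have hweak : ∀ ψ : Euc d → ℝ, Differentiable ℝ ψ →
      Integrable (fun ξ => (sigma Φ ε ξ / τ) * ‖gradient ψ ξ‖^2) →
      ∫ x, (sigma Φ ε x / τ) * inner ℝ (gradient φ x) (gradient ψ x) =
        a1 * (∫ ξ in V1, ψ ξ) - a2 * (∫ ξ in V2, ψ ξ) := by
    intro ψ hψ hψi
    refine weak_eq (w := fun x => sigma Φ ε x / τ) ?_ ?_ (fun ψ => a1 * (∫ ξ in V1, ψ ξ) - a2 * (∫ ξ in V2, ψ ξ))
      hφ hψ hφi hψi ?_ ?_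
    · have := hΦ.continuous
      unfold sigma; fun_prop
    · intro x; unfold sigma; positivity
    · intro t
      have h1 : ∀ {V : Set (Euc d)}, IsCompact (closure V) → ∫ ξ in V, (φ ξ + t * ψ ξ) = (∫ ξ in V, φ ξ) + t * ∫ ξ in V, ψ ξ := by
        intro V hV
        rw [integral_add (hint hV hφ) ((hint hV hψ).const_mul t), integral_const_mul]
      simp only [h1 hV1c, h1 hV2c]
      ring
    · intro ψ hψ hψi
      have := hmin ψ hψ hψi
      linarith
  refine ⟨lt_of_le_of_ne hZ0 fun hZ => ?_, hweak⟩
  have hσ : ∀ x, sigma Φ ε x = 0 := fun x => by unfold sigma; rw [← hZ]; simp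
  obtain ⟨x0, hx0⟩ := hV1n
  obtain ⟨f, hfs, hfc, hf, hfr, hf1⟩ := exists_contDiff_tsupport_subset (n := (⊤ : ℕ∞)) (hV1.mem_nhds hx0)
  have h := hweak f (hf.differentiable (by simp)) (by simp [hσ])
  have hz : ∀ x, x ∉ V1 → f x = 0 := fun x hx => by
    by_contra hne
    exact hx (hfs (subset_tsupport f hne))
  have e2 : ∫ ξ in V2, f ξ = 0 := by
    refine setIntegral_eq_zero_of_forall_eq_zero fun x hx => hz x fun hx1 => ?_
    exact hdisj.le_bot ⟨hx1, hx⟩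
  have e1 : ∫ ξ in V1, f ξ = ∫ ξ, f ξ := setIntegral_eq_integral_of_forall_compl_eq_zero hz
  have e3 : 0 < ∫ ξ, f ξ := by
    refine hf.continuous.integral_pos_of_hasCompactSupport_nonneg_nonzero hfc (fun x => ?_) (x := x0) (by rw [hf1]; norm_num)
    exact (hfr (mem_range_self x)).1
  rw [e1, e2] at h
  simp [hσ] at h
  rcases h with h | h
  · exact ha1.ne' h
  · exact e3.ne' h

lemma Z_bound {d : ℕ} {Φ : Euc d → ℝ} (hΦ : Continuous Φ)
    (hcpt : ∀ a, IsCompact {ξ : Euc d | Φ ξ ≤ a})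
    (htight : ∀ a : ℝ, 0 ≤ a → ∃ C > 0, ∀ ε ∈ Set.Ioo (0:ℝ) 1,
      (∫ ξ in {ξ : Euc d | a ≤ Φ ξ}, Real.exp (-Φ ξ / ε)) ≤ C * Real.exp (-a / ε))
    {h : ℝ} (hh : ∀ ξ, h ≤ Φ ξ) :
    ∃ C > 0, ∀ ε ∈ Set.Ioo (0:ℝ) 1, Zpart Φ ε ≤ C * Real.exp (-h / ε) := by
  obtain ⟨C, hC, hCb⟩ := htight (max h 0) (le_max_right _ _)
  set a := max h 0
  set v := volume.real {ξ : Euc d | Φ ξ < a} with hv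
  have hv0 : 0 ≤ v := measureReal_nonneg
  have hfin : volume {ξ : Euc d | Φ ξ < a} < ⊤ :=
    lt_of_le_of_lt (measure_mono fun x (hx : Φ x < a) => (hx.le : Φ x ≤ a)) (hcpt a).measure_lt_top
  refine ⟨C + v, by positivity, fun ε hε => ?_⟩
  have hε0 := hε.1
  by_cases hi : Integrable (fun ξ : Euc d => Real.exp (-Φ ξ / ε))
  · have hm : MeasurableSet {ξ : Euc d | a ≤ Φ ξ} := (isClosed_le continuous_const hΦ).measurableSet
    have hcompl : {ξ : Euc d | a ≤ Φ ξ}ᶜ = {ξ : Euc d | Φ ξ < a} := by ext; simp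
    unfold Zpart
    rw [← integral_add_compl hm hi, hcompl, add_mul]
    refine add_le_add ((hCb ε hε).trans ?_) ?_
    · have : h ≤ a := le_max_left _ _
      gcongr
    · have hb : ∀ x, Real.exp (-Φ x / ε) ≤ Real.exp (-h / ε) := fun x => by
        have := hh x
        gcongr
      have := norm_setIntegral_le_of_norm_le_const hfin (f := fun ξ : Euc d => Real.exp (-Φ ξ / ε)) (C := Real.exp (-h / ε)) (fun x _ => by
        rw [Real.norm_of_nonneg (by positivity)]; exact hb x)
      rw [mul_comm]
      exact (le_abs_self _).trans this
  · unfold Zpart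
    rw [integral_undef hi]
    positivity

lemma mk_pkg {d : ℕ} {Φ : Euc d → ℝ} (hΦ : ContDiff ℝ (⊤ : ℕ∞) Φ) {V1 V2 : Set (Euc d)}
    (hV1 : IsOpen V1) (hV2 : IsOpen V2)
    (hV1n : V1.Nonempty) (hV1c : IsCompact (closure V1)) (hV2c : IsCompact (closure V2))
    (hdisj : Disjoint V1 V2) {ε τ b M lam : ℝ} (hε : 0 < ε) (hτ : 0 < τ)
    (hb1 : ∀ x ∈ V1, Φ x ≤ b) (hb2 : ∀ x ∈ V2, Φ x ≤ b)
    {φ : Euc d → ℝ} (hφ : Differentiable ℝ φ)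
    {a1 a2 : ℝ} (ha1 : 0 < a1) (ha2 : 0 ≤ a2)
    (hφi : Integrable (fun ξ => (sigma Φ ε ξ / τ) * ‖gradient φ ξ‖^2))
    (hmin : ∀ ψ : Euc d → ℝ, Differentiable ℝ ψ →
      Integrable (fun ξ => (sigma Φ ε ξ / τ) * ‖gradient ψ ξ‖^2) →
      2⁻¹ * (∫ ξ : Euc d, (sigma Φ ε ξ / τ) * ‖gradient φ ξ‖^2)
        - a1 * (∫ ξ in V1, φ ξ) + a2 * (∫ ξ in V2, φ ξ) ≤
      2⁻¹ * (∫ ξ : Euc d, (sigma Φ ε ξ / τ) * ‖gradient ψ ξ‖^2)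
        - a1 * (∫ ξ in V1, ψ ξ) + a2 * (∫ ξ in V2, ψ ξ))
    (hM : ∀ x, |φ x| ≤ M)
    (hlam : a1 * (∫ ξ in V1, φ ξ) - a2 * (∫ ξ in V2, φ ξ) = 2 * lam) :
    Pkg Φ φ ε (Zpart Φ ε * τ) (Zpart Φ ε * τ * ((a1 + a2) * Real.exp (b / ε))) lam M := by
  obtain ⟨hZ, hweak⟩ := weak_setup hΦ hV1 hV1n hV1c hV2c hdisj hτ hφ ha1 hφi hmin
  have hw : ∀ x, sigma Φ ε x / τ = (Zpart Φ ε * τ)⁻¹ * Real.exp (-Φ x / ε) := by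
    intro x; unfold sigma; rw [mul_inv]; ring
  simp_rw [hw] at hφi hweak
  have hc : 0 < Zpart Φ ε * τ := by positivity
  have hwc : Continuous (fun x => (Zpart Φ ε * τ)⁻¹ * Real.exp (-Φ x / ε)) := by
    have := hΦ.continuous; fun_prop
  refine ⟨hε, hc, by positivity, hM, hφ, hφi, ?_, ?_⟩
  · rw [← hlam, ← hweak φ hφ hφi]
    simp_rw [real_inner_self_eq_norm_sq]
  · refine vw hΦ hε hc hφ hφi (fun ψ => a1 * (∫ ξ in V1, ψ ξ) - a2 * (∫ ξ in V2, ψ ξ)) ?_ ?_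
    · intro ψ hψ hψc
      refine hweak ψ (hψ.differentiable (by simp)) ?_
      simp_rw [norm_gradient']
      refine Continuous.integrable_of_hasCompactSupport ?_ ?_
      · exact hwc.mul ((hψ.continuous_fderiv (by simp)).norm.pow 2)
      · refine HasCompactSupport.mul_left ?_
        exact ((hψc.fderiv ℝ).norm).comp_left (g := fun x : ℝ => x ^ 2) (by simp)
    · intro χ hχ hχc
      have hχi : Integrable (fun x => |χ x|) := (hχ.continuous.integrable_of_hasCompactSupport hχc).abs
      have key : ∀ V : Set (Euc d), IsOpen V → (∀ x ∈ V, Φ x ≤ b) →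
          |∫ x in V, Real.exp (Φ x / ε) * χ x| ≤ Real.exp (b / ε) * ∫ x, |χ x| := by
        intro V hV hb
        calc |∫ x in V, Real.exp (Φ x / ε) * χ x| ≤ ∫ x in V, |Real.exp (Φ x / ε) * χ x| := abs_integral_le_integral_abs
          _ ≤ ∫ x in V, Real.exp (b / ε) * |χ x| := by
            refine integral_mono_of_nonneg (Eventually.of_forall fun x => by positivity) (hχi.integrableOn.const_mul _) ?_
            refine (ae_restrict_iff' hV.measurableSet).2 (Eventually.of_forall fun x hx => ?_)
            beta_reduce
            rw [abs_mul, abs_of_pos (Real.exp_pos _)]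
            have := hb x hx
            gcongr
          _ = Real.exp (b / ε) * ∫ x in V, |χ x| := by rw [integral_const_mul]
          _ ≤ _ := by
            refine mul_le_mul_of_nonneg_left ?_ (by positivity)
            exact setIntegral_le_integral hχi (Eventually.of_forall fun x => abs_nonneg _)
      have k1 := mul_le_mul_of_nonneg_left (key V1 hV1 hb1) ha1.le
      have k2 := mul_le_mul_of_nonneg_left (key V2 hV2 hb2) ha2
      refine (abs_sub _ _).trans ?_
      rw [abs_mul, abs_mul, abs_of_pos ha1, abs_of_nonneg ha2]
      linarith

lemma asy (A : ℝ) {k : ℝ} (hk : 0 < k) : ∀ᶠ ε in 𝓝[>] (0:ℝ), A * ε⁻¹ * Real.exp (-k / ε) ≤ 1 := by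
  have h1 : Tendsto (fun x : ℝ => x * Real.exp (-k * x)) atTop (𝓝 0) := by
    have h2 := (Real.tendsto_pow_mul_exp_neg_atTop_nhds_zero 1).comp (tendsto_id.const_mul_atTop hk)
    have h3 := h2.const_mul k⁻¹
    rw [mul_zero] at h3
    refine h3.congr fun x => ?_
    simp only [Function.comp, id, pow_one, neg_mul]
    field_simp
  have h4 := (h1.comp tendsto_inv_nhdsGT_zero).const_mul A
  rw [mul_zero] at h4
  filter_upwards [h4.eventually (gt_mem_nhds (zero_lt_one))] with ε hε
  simp only [Function.comp] at hε
  rw [mul_assoc, div_eq_mul_inv]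
  exact hε.le

lemma osc1 {d : ℕ} (hd : 1 ≤ d) {Φ : Euc d → ℝ} (hΦ : ContDiff ℝ (⊤ : ℕ∞) Φ) {H : ℝ}
    {s C : Set (Euc d)} {x : Euc d} (hs : IsPreconnected s) (hsa : ∀ z ∈ s, Φ z < H)
    (hC : IsCompact C) (hCs : C ⊆ s) (hx : x ∈ s)
    {φ : ℝ → Euc d → ℝ} {c θ lam M : ℝ → ℝ}
    (hP : ∀ ε ∈ Ioo (0:ℝ) 1, Pkg Φ (φ ε) ε (c ε) (θ ε) (lam ε) (M ε))
    (hlam : ∀ ε ∈ Ioo (0:ℝ) 1, 0 ≤ lam ε)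
    {Cc Cθ : ℝ} (hCc : 0 ≤ Cc) (hCθ : 0 ≤ Cθ)
    (hc : ∀ ε ∈ Ioo (0:ℝ) 1, c ε ≤ Cc * ε⁻¹ * Real.exp (-H / ε))
    (hθ : ∀ ε ∈ Ioo (0:ℝ) 1, θ ε ≤ Cθ * ε⁻¹) :
    ∃ k > 0, ∀ᶠ ε in 𝓝[>] (0:ℝ), ∀ y ∈ C, |φ ε x - φ ε y| ≤ Real.exp (-k / ε) * (1 + lam ε + M ε) := by
  obtain ⟨C0, hC0, R0, hR0, a', ha', hch⟩ := pkg_chain hd hΦ hs hsa hC hCs hx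
  set δ := H - a' with hδ
  have hδ0 : 0 < δ := by rw [hδ]; linarith
  have hd' : (1:ℝ) ≤ d := by exact_mod_cast hd
  have hκ0 : 0 < δ / (4 * d) := by positivity
  set κ := δ / (4 * d) with hκ
  have hκd : d * κ = δ / 4 := by rw [hκ]; field_simp
  have hκle : κ ≤ δ / 4 := by rw [← hκd]; nlinarith
  refine ⟨κ / 2, by positivity, ?_⟩
  have h01 : ∀ᶠ ε in 𝓝[>] (0:ℝ), ε ∈ Ioo (0:ℝ) 1 := Ioo_mem_nhdsGT one_pos
  filter_upwards [h01, asy R0⁻¹ hκ0, asy (C0 * (1 + Cθ + 2 * Cc + 1)) (show 0 < κ / 2 by positivity)] with ε hε hr hA y hy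
  have hε0 := hε.1
  have hεi : 1 ≤ ε⁻¹ := (one_le_inv₀ hε0).2 hε.2.le
  have P := hP ε hε
  have hM0 : 0 ≤ M ε := (abs_nonneg _).trans (P.hM x)
  have hl := hlam ε hε
  have hrR : Real.exp (-κ / ε) ≤ R0 := by
    have h1 : R0⁻¹ * Real.exp (-κ / ε) ≤ 1 := by
      refine le_trans ?_ hr
      have : 0 ≤ R0⁻¹ := by positivity
      have h2 : R0⁻¹ ≤ R0⁻¹ * ε⁻¹ := le_mul_of_one_le_right this hεi
      gcongr
    rwa [inv_mul_le_iff₀ hR0, mul_one] at h1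
  have hmain := hch (φ ε) ε _ _ _ _ P (Real.exp (-κ / ε)) (Real.exp (δ / 2 / ε)) (Real.exp_pos _) hrR (Real.exp_pos _) y hy
  refine hmain.trans ?_
  have hrd : (Real.exp (-κ / ε) ^ d)⁻¹ = Real.exp (δ / 4 / ε) := by
    rw [← Real.exp_nat_mul, ← Real.exp_neg, ← hκd]; congr 1; ring
  set E := Real.exp (-κ / ε) with hE
  have t1 : E * (M ε / ε + θ ε) ≤ E * ε⁻¹ * (1 + Cθ) * (1 + lam ε + M ε) := by
    have h1 : M ε / ε + θ ε ≤ ε⁻¹ * ((1 + Cθ) * (1 + lam ε + M ε)) := by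
      have := hθ ε hε
      have h2 : M ε + Cθ ≤ (1 + Cθ) * (1 + lam ε + M ε) := by nlinarith [mul_nonneg hCθ hl, mul_nonneg hCθ hM0]
      calc M ε / ε + θ ε ≤ ε⁻¹ * (M ε + Cθ) := by rw [div_eq_mul_inv]; linarith
        _ ≤ _ := by gcongr
    calc _ ≤ E * (ε⁻¹ * ((1 + Cθ) * (1 + lam ε + M ε))) := by gcongr
      _ = _ := by ring
  have hexp4 : Real.exp (-(δ / 4) / ε) ≤ E := by rw [hE]; gcongr
  have t2 : Real.exp (δ / 4 / ε) * (Real.exp (δ / 2 / ε) * (c ε * Real.exp (a' / ε) * (2 * lam ε))) ≤ E * ε⁻¹ * (2 * Cc) * (1 + lam ε + M ε) := by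
    have h1 : Real.exp (δ / 4 / ε) * (Real.exp (δ / 2 / ε) * ((Cc * ε⁻¹ * Real.exp (-H / ε)) * Real.exp (a' / ε) * (2 * lam ε)))
        = Real.exp (-(δ / 4) / ε) * ε⁻¹ * (2 * Cc) * lam ε := by
      have : Real.exp (-(δ / 4) / ε) = Real.exp (δ / 4 / ε) * Real.exp (δ / 2 / ε) * Real.exp (-H / ε) * Real.exp (a' / ε) := by
        rw [← Real.exp_add, ← Real.exp_add, ← Real.exp_add]; congr 1; rw [hδ]; ring
      rw [this]; ring
    calc _ ≤ Real.exp (δ / 4 / ε) * (Real.exp (δ / 2 / ε) * ((Cc * ε⁻¹ * Real.exp (-H / ε)) * Real.exp (a' / ε) * (2 * lam ε))) := by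
          have := hc ε hε
          gcongr
      _ = _ := h1
      _ ≤ E * ε⁻¹ * (2 * Cc) * (1 + lam ε + M ε) := by
          gcongr
          linarith
  have t3 : Real.exp (δ / 4 / ε) * (Real.exp (δ / 2 / ε))⁻¹ ≤ E * ε⁻¹ * 1 * (1 + lam ε + M ε) := by
    have h1 : Real.exp (δ / 4 / ε) * (Real.exp (δ / 2 / ε))⁻¹ = Real.exp (-(δ / 4) / ε) := by
      rw [← Real.exp_neg, ← Real.exp_add]; congr 1; ring
    rw [h1]
    calc _ ≤ E * 1 * 1 * 1 := by linarith
      _ ≤ _ := by gcongr; linarith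
  have hEE : E = Real.exp (-(κ / 2) / ε) * Real.exp (-(κ / 2) / ε) := by
    rw [hE, ← Real.exp_add]; congr 1; ring
  have hfin : C0 * (1 + Cθ + 2 * Cc + 1) * ε⁻¹ * E ≤ Real.exp (-(κ / 2) / ε) := by
    rw [hEE, ← mul_assoc]
    exact mul_le_of_le_one_left (by positivity) hA
  calc _ = C0 * (E * (M ε / ε + θ ε) + Real.exp (δ / 4 / ε) * (Real.exp (δ / 2 / ε) * (c ε * Real.exp (a' / ε) * (2 * lam ε)))
        + Real.exp (δ / 4 / ε) * (Real.exp (δ / 2 / ε))⁻¹) := by rw [hrd]; ring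
    _ ≤ C0 * (E * ε⁻¹ * (1 + Cθ) * (1 + lam ε + M ε) + E * ε⁻¹ * (2 * Cc) * (1 + lam ε + M ε) + E * ε⁻¹ * 1 * (1 + lam ε + M ε)) := by
      gcongr
    _ = (C0 * (1 + Cθ + 2 * Cc + 1) * ε⁻¹ * E) * (1 + lam ε + M ε) := by ring
    _ ≤ _ := by gcongr

lemma osc2 {d : ℕ} (hd : 1 ≤ d) {Φ : Euc d → ℝ} (hΦ : ContDiff ℝ (⊤ : ℕ∞) Φ) {H : ℝ}
    {s : Set (Euc d)} {x y : Euc d} (hs : IsPreconnected s) (hsa : ∀ z ∈ s, Φ z ≤ H)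
    (hx : x ∈ s) (hy : y ∈ s)
    {φ : ℝ → Euc d → ℝ} {c θ lam M : ℝ → ℝ}
    (hP : ∀ ε ∈ Ioo (0:ℝ) 1, Pkg Φ (φ ε) ε (c ε) (θ ε) (lam ε) (M ε))
    (hlam : ∀ ε ∈ Ioo (0:ℝ) 1, 0 ≤ lam ε)
    {Cc Cθ : ℝ} (hCc : 0 ≤ Cc) (hCθ : 0 ≤ Cθ)
    (hc : ∀ ε ∈ Ioo (0:ℝ) 1, c ε ≤ Cc * ε⁻¹ * Real.exp (-H / ε))
    (hθ : ∀ ε ∈ Ioo (0:ℝ) 1, θ ε ≤ Cθ * ε⁻¹) {b : ℝ} (hb : 0 < b) :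
    ∀ᶠ ε in 𝓝[>] (0:ℝ), |φ ε x - φ ε y| ≤ 16⁻¹ * (1 + lam ε + M ε) + Real.exp (b / ε) := by
  have hδ0 : 0 < b / (2 * d + 3) := by positivity
  set δ := b / (2 * d + 3) with hδ
  have hbδ : b = (2 * d + 3) * δ := by rw [hδ]; field_simp
  obtain ⟨C0, hC0, R0, hR0, a', ha', hch⟩ := pkg_chain hd hΦ (a := H + δ) hs (fun z hz => by linarith [hsa z hz])
    (isCompact_singleton (x := y)) (by simpa using hy) hx
  have h01 : ∀ᶠ ε in 𝓝[>] (0:ℝ), ε ∈ Ioo (0:ℝ) 1 := Ioo_mem_nhdsGT one_pos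
  filter_upwards [h01, asy R0⁻¹ hδ0, asy (16 * (C0 * (1 + Cθ + 2 * Cc))) hδ0, asy C0 hδ0] with ε hε hr hA hA2
  have hε0 := hε.1
  have hεi : 1 ≤ ε⁻¹ := (one_le_inv₀ hε0).2 hε.2.le
  have P := hP ε hε
  have hM0 : 0 ≤ M ε := (abs_nonneg _).trans (P.hM x)
  have hl := hlam ε hε
  have hrR : Real.exp (-δ / ε) ≤ R0 := by
    have h1 : R0⁻¹ * Real.exp (-δ / ε) ≤ 1 := by
      refine le_trans ?_ hr
      have : 0 ≤ R0⁻¹ := by positivity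
      have h2 : R0⁻¹ ≤ R0⁻¹ * ε⁻¹ := le_mul_of_one_le_right this hεi
      gcongr
    rwa [inv_mul_le_iff₀ hR0, mul_one] at h1
  have hmain := hch (φ ε) ε _ _ _ _ P (Real.exp (-δ / ε)) (Real.exp (-((d + 2) * δ) / ε)) (Real.exp_pos _) hrR (Real.exp_pos _) y (mem_singleton y)
  refine hmain.trans ?_
  have hrd : (Real.exp (-δ / ε) ^ d)⁻¹ = Real.exp (d * δ / ε) := by
    rw [← Real.exp_nat_mul, ← Real.exp_neg]; congr 1; ring
  set E := Real.exp (-δ / ε) with hE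
  have t1 : E * (M ε / ε + θ ε) ≤ E * ε⁻¹ * (1 + Cθ) * (1 + lam ε + M ε) := by
    have h1 : M ε / ε + θ ε ≤ ε⁻¹ * ((1 + Cθ) * (1 + lam ε + M ε)) := by
      have := hθ ε hε
      have h2 : M ε + Cθ ≤ (1 + Cθ) * (1 + lam ε + M ε) := by nlinarith [mul_nonneg hCθ hl, mul_nonneg hCθ hM0]
      calc M ε / ε + θ ε ≤ ε⁻¹ * (M ε + Cθ) := by rw [div_eq_mul_inv]; linarith
        _ ≤ _ := by gcongr
    calc _ ≤ E * (ε⁻¹ * ((1 + Cθ) * (1 + lam ε + M ε))) := by gcongr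
      _ = _ := by ring
  have t2 : Real.exp (d * δ / ε) * (Real.exp (-((d + 2) * δ) / ε) * (c ε * Real.exp (a' / ε) * (2 * lam ε))) ≤ E * ε⁻¹ * (2 * Cc) * (1 + lam ε + M ε) := by
    have h1 : Real.exp (d * δ / ε) * (Real.exp (-((d + 2) * δ) / ε) * ((Cc * ε⁻¹ * Real.exp (-H / ε)) * Real.exp ((H + δ) / ε) * (2 * lam ε)))
        = E * ε⁻¹ * (2 * Cc) * lam ε := by
      have : E = Real.exp (d * δ / ε) * Real.exp (-((d + 2) * δ) / ε) * Real.exp (-H / ε) * Real.exp ((H + δ) / ε) := by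
        rw [hE, ← Real.exp_add, ← Real.exp_add, ← Real.exp_add]; congr 1; ring
      rw [this]; ring
    calc _ ≤ Real.exp (d * δ / ε) * (Real.exp (-((d + 2) * δ) / ε) * ((Cc * ε⁻¹ * Real.exp (-H / ε)) * Real.exp ((H + δ) / ε) * (2 * lam ε))) := by
          have := hc ε hε
          gcongr
      _ = _ := h1
      _ ≤ E * ε⁻¹ * (2 * Cc) * (1 + lam ε + M ε) := by
          gcongr
          linarith
  have t3 : C0 * (Real.exp (d * δ / ε) * (Real.exp (-((d + 2) * δ) / ε))⁻¹) ≤ Real.exp (b / ε) := by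
    have h1 : Real.exp (d * δ / ε) * (Real.exp (-((d + 2) * δ) / ε))⁻¹ = E * Real.exp (b / ε) := by
      rw [← Real.exp_neg, ← Real.exp_add, hE, ← Real.exp_add]; congr 1; rw [hbδ]; ring
    rw [h1, ← mul_assoc]
    refine mul_le_of_le_one_left (by positivity) (le_trans ?_ hA2)
    have h2 : C0 ≤ C0 * ε⁻¹ := le_mul_of_one_le_right hC0 hεi
    gcongr
  have hfin : C0 * (1 + Cθ + 2 * Cc) * ε⁻¹ * E ≤ 16⁻¹ := by
    have : (16 * (C0 * (1 + Cθ + 2 * Cc))) * ε⁻¹ * E ≤ 1 := hA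
    linarith
  calc _ = C0 * (E * (M ε / ε + θ ε) + Real.exp (d * δ / ε) * (Real.exp (-((d + 2) * δ) / ε) * (c ε * Real.exp (a' / ε) * (2 * lam ε))))
        + C0 * (Real.exp (d * δ / ε) * (Real.exp (-((d + 2) * δ) / ε))⁻¹) := by rw [hrd]; ring
    _ ≤ C0 * (E * ε⁻¹ * (1 + Cθ) * (1 + lam ε + M ε) + E * ε⁻¹ * (2 * Cc) * (1 + lam ε + M ε)) + Real.exp (b / ε) := by
      gcongr
    _ = (C0 * (1 + Cθ + 2 * Cc) * ε⁻¹ * E) * (1 + lam ε + M ε) + Real.exp (b / ε) := by ring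
    _ ≤ _ := by gcongr

lemma avg_le {d : ℕ} {V : Set (Euc d)} (hVm : MeasurableSet V) (hV0 : 0 < (volume V).toReal) {f : Euc d → ℝ} (hf : IntegrableOn f V)
    {x B : ℝ} (hB : ∀ y ∈ V, |x - f y| ≤ B) : |x - (volume V).toReal⁻¹ * ∫ y in V, f y| ≤ B := by
  have hfin : volume V < ⊤ := by
    rw [lt_top_iff_ne_top]; intro h; simp [h] at hV0
  have h1 : ∫ y in V, (x - f y) = (volume V).toReal * x - ∫ y in V, f y := by
    have hci : Integrable (fun _ : Euc d => x) (volume.restrict V) :=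
      integrableOn_const (C := x) hfin.ne (by simp)
    rw [integral_sub hci hf, setIntegral_const, smul_eq_mul]
    rfl
  have h2 := norm_setIntegral_le_of_norm_le_const hfin (f := fun y => x - f y) (C := B) hB
  rw [h1, Real.norm_eq_abs] at h2
  have h3 : x - (volume V).toReal⁻¹ * ∫ y in V, f y = (volume V).toReal⁻¹ * ((volume V).toReal * x - ∫ y in V, f y) := by
    field_simp
  rw [h3, abs_mul, abs_of_pos (inv_pos.2 hV0), inv_mul_le_iff₀ hV0]
  exact h2.trans (le_of_eq (mul_comm _ _))

/-- **L∞ estimate on valleys:**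
`‖φ^ε − λ_{ε,i}‖_{L^∞(V_i)} ≤ o_ε(1)(1 + λ_ε^{1−1/p})` for a fixed `p ∈ (d, ∞)`. -/
theorem Linfty_estimate_on_valleys
    (d K : ℕ) (hd : 1 ≤ d) (hK : 2 ≤ K)
    (Φ : Euc d → ℝ) (hΦ : ContDiff ℝ (⊤ : ℕ∞) Φ)
    (hcoer : Tendsto Φ (cocompact (Euc d)) atTop)
    (hfin : {ξ : Euc d | fderiv ℝ Φ ξ = 0}.Finite)
    (htight : ∀ a : ℝ, 0 ≤ a → ∃ C > 0, ∀ ε ∈ Set.Ioo (0:ℝ) 1,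
      (∫ ξ in {ξ : Euc d | a ≤ Φ ξ}, Real.exp (-Φ ξ / ε)) ≤ C * Real.exp (-a / ε))
    (H h : ℝ) (hhH : h < H)
    (W : Fin K → Set (Euc d)) (m : Fin K → Euc d)
    (hWc : ∀ i, W i = connectedComponentIn {ξ : Euc d | Φ ξ < H} (m i))
    (hWcover : {ξ : Euc d | Φ ξ < H} = ⋃ i, W i)
    (hWdisj : Pairwise (Function.onFun Disjoint W))
    (hUconn : IsConnected (⋃ i, closure (W i)))
    (hmmem : ∀ i, m i ∈ W i) (hmval : ∀ i, Φ (m i) = h)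
    (hmmin : ∀ i, ∀ ξ ∈ W i, h ≤ Φ ξ)
    (hmnd : ∀ i, 0 < (hessian Φ (m i)).det)
    (S : Finset (Euc d))
    (hS : ∀ σ ∈ S, Φ σ = H ∧ fderiv ℝ Φ σ = 0)
    (hSfull : ∀ ξ : Euc d, fderiv ℝ Φ ξ = 0 → Φ ξ = H → ξ ∈ S)
    (lam : Euc d → ℝ)
    (hlam : ∀ σ ∈ S, 0 < lam σ ∧
      Module.End.HasEigenvalue (Matrix.toLin' (hessian Φ σ)) (-lam σ) ∧
      (∀ r : ℝ, Module.End.HasEigenvalue (Matrix.toLin' (hessian Φ σ)) r → r = -lam σ ∨ 0 < r) ∧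
      Module.finrank ℝ (Module.End.eigenspace (Matrix.toLin' (hessian Φ σ)) (-lam σ)) = 1)
    (hdetS : ∀ σ ∈ S, (hessian Φ σ).det < 0)
    (η : ℝ) (hηpos : 0 < η) (hηlt : η < H - h)
    (hnoc : ∀ ξ : Euc d, fderiv ℝ Φ ξ = 0 → Φ ξ ∉ Set.Ioo (H - η) H)
    (V : Fin K → Set (Euc d)) (hV : ∀ i, V i = {ξ | ξ ∈ W i ∧ Φ ξ < H - η})
    (i1 i2 : Fin K) (hi1 : (i1 : ℕ) = 0) (hi2 : (i2 : ℕ) = 1)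
    (Ifun : ℝ → (Euc d → ℝ) → ℝ)
    (hIfun : ∀ ε : ℝ, ∀ ψ : Euc d → ℝ, Ifun ε ψ =
      2⁻¹ * (∫ ξ : Euc d, (sigma Φ ε ξ / tau H h ε) * ‖gradient ψ ξ‖^2)
        - (volume (V i1)).toReal⁻¹ * (∫ ξ in V i1, ψ ξ)
        + (volume (V i2)).toReal⁻¹ * (∫ ξ in V i2, ψ ξ))
    (φ : ℝ → Euc d → ℝ)
    (hφreg : ∀ ε ∈ Set.Ioo (0:ℝ) 1, Differentiable ℝ (φ ε) ∧
      Integrable (fun ξ => (sigma Φ ε ξ / tau H h ε) * ‖gradient (φ ε) ξ‖^2))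
    (hφmin : ∀ ε ∈ Set.Ioo (0:ℝ) 1, ∀ ψ : Euc d → ℝ, Differentiable ℝ ψ →
      Integrable (fun ξ => (sigma Φ ε ξ / tau H h ε) * ‖gradient ψ ξ‖^2) →
      Ifun ε (φ ε) ≤ Ifun ε ψ)
    (lamE : ℝ → Fin K → ℝ)
    (hlamE : ∀ ε i, lamE ε i = (volume (V i)).toReal⁻¹ * ∫ ξ in V i, φ ε ξ)
    (hnorm : ∀ ε ∈ Set.Ioo (0:ℝ) 1, lamE ε i1 = -(lamE ε i2) ∧ 0 ≤ lamE ε i1)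
    (hsupn : ∀ ε ∈ Set.Ioo (0:ℝ) 1, ∀ ξ : Euc d, |φ ε ξ| ≤
      max (sSup ((fun ζ => |φ ε ζ|) '' V i1)) (sSup ((fun ζ => |φ ε ζ|) '' V i2)))
    (p : ℝ) (hp : (d : ℝ) < p) :
    ∃ err : ℝ → ℝ, Tendsto err (𝓝[>] (0:ℝ)) (𝓝 0) ∧
      ∀ ε ∈ Set.Ioo (0:ℝ) 1, ∀ i, ∀ ξ ∈ V i,
        |φ ε ξ - lamE ε i| ≤ err ε * (1 + lamE ε i1 ^ (1 - 1/p)) := by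
  have hcont := hΦ.continuous
  have hcpt : ∀ a, IsCompact {ξ : Euc d | Φ ξ ≤ a} := by
    intro a
    obtain ⟨K', hK', hsub⟩ := mem_cocompact.1 (hcoer.eventually_gt_atTop a)
    refine hK'.of_isClosed_subset (isClosed_le hcont continuous_const) fun x hx => ?_
    by_contra hxK
    have h1 : a < Φ x := hsub hxK
    exact absurd h1 (not_lt.2 hx)
  have hge : ∀ ξ, h ≤ Φ ξ := by
    intro ξ
    by_cases hξ : Φ ξ < H
    · have : ξ ∈ ⋃ i, W i := hWcover ▸ hξ
      obtain ⟨i, hi⟩ := mem_iUnion.1 this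
      exact hmmin i ξ hi
    · linarith
  have hUo : IsOpen {ξ : Euc d | Φ ξ < H} := isOpen_lt hcont continuous_const
  have hWo : ∀ i, IsOpen (W i) := fun i => by rw [hWc]; exact hUo.connectedComponentIn
  have hWp : ∀ i, IsPreconnected (W i) := fun i => by
    rw [hWc]; exact isPreconnected_connectedComponentIn
  have hWlt : ∀ i, ∀ z ∈ W i, Φ z < H := fun i z hz => by
    rw [hWc i] at hz
    have h1 : z ∈ {ξ : Euc d | Φ ξ < H} := connectedComponentIn_subset _ _ hz
    exact h1
  have hVo : ∀ i, IsOpen (V i) := fun i => by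
    rw [hV]; exact (hWo i).inter (isOpen_lt hcont continuous_const)
  have hmV : ∀ i, m i ∈ V i := fun i => by
    rw [hV]; exact ⟨hmmem i, by rw [hmval]; linarith⟩
  have hVb : ∀ i, ∀ x ∈ V i, Φ x ≤ H - η := fun i x hx => by
    rw [hV] at hx; exact hx.2.le
  have hVW : ∀ i, V i ⊆ W i := fun i x hx => by rw [hV] at hx; exact hx.1
  have hclb : ∀ i, closure (V i) ⊆ {x | Φ x ≤ H - η} := fun i =>
    closure_minimal (hVb i) (isClosed_le hcont continuous_const)
  have hVc : ∀ i, IsCompact (closure (V i)) := fun i =>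
    (hcpt (H - η)).of_isClosed_subset isClosed_closure (hclb i)
  have hclW : ∀ i, closure (V i) ⊆ W i := by
    intro i x hx
    have hxH : Φ x < H := lt_of_le_of_lt (hclb i hx) (by linarith)
    have : x ∈ ⋃ i, W i := hWcover ▸ hxH
    obtain ⟨j, hj⟩ := mem_iUnion.1 this
    obtain ⟨y, hyj, hyi⟩ := mem_closure_iff.1 hx (W j) (hWo j) hj
    by_cases hij : j = i
    · exact hij ▸ hj
    · exact absurd ⟨hyj, hVW i hyi⟩ (fun hh => (hWdisj hij).le_bot hh)
  have hvol : ∀ i, 0 < (volume (V i)).toReal := fun i => by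
    refine ENNReal.toReal_pos ((hVo i).measure_pos volume ⟨m i, hmV i⟩).ne' ?_
    exact (lt_of_le_of_lt (measure_mono subset_closure) (hVc i).measure_lt_top).ne
  have h12 : i1 ≠ i2 := by
    intro he; rw [he, hi2] at hi1; exact one_ne_zero hi1
  have hdisj : Disjoint (V i1) (V i2) := (hWdisj h12).mono (hVW i1) (hVW i2)
  have hintV : ∀ ε ∈ Set.Ioo (0:ℝ) 1, ∀ i, IntegrableOn (φ ε) (V i) := fun ε hε i =>
    ((hφreg ε hε).1.continuous.continuousOn.integrableOn_compact (hVc i)).mono_set subset_closure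
  set M : ℝ → ℝ := fun ε => max (sSup ((fun ζ => |φ ε ζ|) '' V i1)) (sSup ((fun ζ => |φ ε ζ|) '' V i2)) with hMdef
  have hM : ∀ ε ∈ Set.Ioo (0:ℝ) 1, ∀ ξ : Euc d, |φ ε ξ| ≤ M ε := hsupn
  have htau : ∀ ε ∈ Set.Ioo (0:ℝ) 1, 0 < tau H h ε := fun ε hε => by
    have := hε.1
    unfold tau; positivity
  set a1 := (volume (V i1)).toReal⁻¹ with ha1
  set a2 := (volume (V i2)).toReal⁻¹ with ha2
  have ha1p : 0 < a1 := inv_pos.2 (hvol i1)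
  have ha2p : 0 < a2 := inv_pos.2 (hvol i2)
  have hP : ∀ ε ∈ Set.Ioo (0:ℝ) 1, Pkg Φ (φ ε) ε (Zpart Φ ε * tau H h ε)
      (Zpart Φ ε * tau H h ε * ((a1 + a2) * Real.exp ((H - η) / ε))) (lamE ε i1) (M ε) := by
    intro ε hε
    refine mk_pkg hΦ (hVo i1) (hVo i2) ⟨m i1, hmV i1⟩ (hVc i1) (hVc i2) hdisj hε.1 (htau ε hε)
      (hVb i1) (hVb i2) (hφreg ε hε).1 ha1p ha2p.le (hφreg ε hε).2 ?_ (hM ε hε) ?_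
    · intro ψ hψ hψi
      have := hφmin ε hε ψ hψ hψi
      rw [hIfun, hIfun] at this
      exact this
    · have e1 := hlamE ε i1
      have e2 := hlamE ε i2
      have e3 := (hnorm ε hε).1
      rw [← ha1] at e1
      rw [← ha2] at e2
      rw [← e1, ← e2]
      linarith
  obtain ⟨Cz, hCz, hZ⟩ := Z_bound hcont hcpt htight hge
  have hc : ∀ ε ∈ Set.Ioo (0:ℝ) 1, Zpart Φ ε * tau H h ε ≤ Cz * ε⁻¹ * Real.exp (-H / ε) := by
    intro ε hε
    have h1 := mul_le_mul_of_nonneg_right (hZ ε hε) (htau ε hε).le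
    refine h1.trans (le_of_eq ?_)
    have : Real.exp (-H / ε) = Real.exp (-h / ε) * Real.exp (-(H - h) / ε) := by
      rw [← Real.exp_add]; congr 1; ring
    rw [this]; unfold tau; ring
  have hθ : ∀ ε ∈ Set.Ioo (0:ℝ) 1, Zpart Φ ε * tau H h ε * ((a1 + a2) * Real.exp ((H - η) / ε)) ≤
      (Cz * (a1 + a2)) * ε⁻¹ := by
    intro ε hε
    have hε0 := hε.1
    have h1 : Real.exp (-H / ε) * Real.exp ((H - η) / ε) ≤ 1 := by
      rw [← Real.exp_add, Real.exp_le_one_iff, ← add_div]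
      exact div_nonpos_of_nonpos_of_nonneg (by linarith) hε0.le
    calc _ ≤ (Cz * ε⁻¹ * Real.exp (-H / ε)) * ((a1 + a2) * Real.exp ((H - η) / ε)) := by
          have := hc ε hε
          gcongr
      _ = (Cz * (a1 + a2)) * ε⁻¹ * (Real.exp (-H / ε) * Real.exp ((H - η) / ε)) := by ring
      _ ≤ _ := mul_le_of_le_one_right (by positivity) h1
  have hlam0 : ∀ ε ∈ Set.Ioo (0:ℝ) 1, 0 ≤ lamE ε i1 := fun ε hε => (hnorm ε hε).2
  have hosc := fun i => osc1 hd hΦ (hWp i) (hWlt i) (hVc i) (hclW i) (hmmem i)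
    (lam := fun ε => lamE ε i1) hP hlam0 hCz.le (show 0 ≤ Cz * (a1 + a2) by positivity) hc hθ
  choose kk hkk hosc' using hosc
  obtain ⟨i0, -, hi0⟩ := Finset.exists_min_image Finset.univ kk ⟨i1, Finset.mem_univ _⟩
  set k := kk i0 with hk
  have hk0 : 0 < k := hkk i0
  have hconn := osc2 hd hΦ hUconn.isPreconnected (H := H) (x := m i1) (y := m i2)
    (fun z hz => by
      obtain ⟨i, hi⟩ := mem_iUnion.1 hz
      exact closure_minimal (fun w hw => (hWlt i w hw).le) (isClosed_le hcont continuous_const) hi)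
    (mem_iUnion.2 ⟨i1, subset_closure (hmmem i1)⟩) (mem_iUnion.2 ⟨i2, subset_closure (hmmem i2)⟩)
    (lam := fun ε => lamE ε i1) hP hlam0 hCz.le (show 0 ≤ Cz * (a1 + a2) by positivity) hc hθ
    (show 0 < k / 2 by positivity)
  have hgood : ∀ᶠ ε in 𝓝[>] (0:ℝ), ∀ i, ∀ ξ ∈ V i, |φ ε ξ - lamE ε i| ≤ 28 * Real.exp (-(k / 2) / ε) := by
    have h01 : ∀ᶠ ε in 𝓝[>] (0:ℝ), ε ∈ Ioo (0:ℝ) 1 := Ioo_mem_nhdsGT one_pos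
    filter_upwards [h01, eventually_all.2 hosc', hconn, asy 16 hk0] with ε hε ho hcn h16 i ξ hξ
    have hε0 := hε.1
    have hεi : 1 ≤ ε⁻¹ := (one_le_inv₀ hε0).2 hε.2.le
    set E := Real.exp (-k / ε) with hE
    have hE0 : 0 < E := Real.exp_pos _
    have hEs : 2 * E ≤ 8⁻¹ := by nlinarith
    have hl := hlam0 ε hε
    have hM0 : 0 ≤ M ε := (abs_nonneg _).trans (hM ε hε ξ)
    set L := lamE ε i1 with hL
    have hosc2 : ∀ i, ∀ y ∈ V i, |φ ε (m i) - φ ε y| ≤ E * (1 + L + M ε) := by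
      intro i y hy
      refine (ho i y (subset_closure hy)).trans ?_
      have : k ≤ kk i := hi0 i (Finset.mem_univ _)
      rw [hE]
      gcongr
    have hdev : ∀ i, ∀ y ∈ V i, |φ ε y - lamE ε i| ≤ 2 * E * (1 + L + M ε) := by
      intro i y hy
      rw [hlamE]
      refine avg_le (hVo i).measurableSet (hvol i) (hintV ε hε i) fun z hz => ?_
      have h1 := hosc2 i y hy
      have h2 := hosc2 i z hz
      rw [abs_le] at *
      constructor <;> linarith
    have hS0 : 0 ≤ 1 + L + M ε := by linarith
    have hdev8 : ∀ i, ∀ y ∈ V i, |φ ε y - lamE ε i| ≤ 8⁻¹ * (1 + L + M ε) := fun i y hy =>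
      (hdev i y hy).trans (mul_le_mul_of_nonneg_right hEs hS0)
    have hL2 : lamE ε i2 = -L := by have := (hnorm ε hε).1; linarith
    have hML : M ε ≤ L + 8⁻¹ * (1 + L + M ε) := by
      refine max_le (csSup_le ⟨_, mem_image_of_mem _ (hmV i1)⟩ ?_) (csSup_le ⟨_, mem_image_of_mem _ (hmV i2)⟩ ?_)
      · rintro _ ⟨y, hy, rfl⟩
        have := hdev8 i1 y hy
        rw [← hL] at this
        rw [abs_le] at *
        constructor <;> linarith
      · rintro _ ⟨y, hy, rfl⟩
        have := hdev8 i2 y hy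
        rw [hL2] at this
        rw [abs_le] at *
        constructor <;> linarith
    have hM3 : M ε ≤ 3 * L + 1 := by linarith
    have hB1 : 1 ≤ Real.exp (k / 2 / ε) := Real.one_le_exp (by positivity)
    have hL3 : L ≤ 3 * Real.exp (k / 2 / ε) := by
      have d1 := hdev8 i1 _ (hmV i1)
      have d2 := hdev8 i2 _ (hmV i2)
      have d3 : |φ ε (m i1) - φ ε (m i2)| ≤ 16⁻¹ * (1 + L + M ε) + Real.exp (k / 2 / ε) := hcn
      rw [← hL] at d1
      rw [hL2] at d2
      rw [abs_le] at d1 d2 d3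
      linarith
    refine (hdev i ξ hξ).trans ?_
    have hEE : E * Real.exp (k / 2 / ε) = Real.exp (-(k / 2) / ε) := by
      rw [hE, ← Real.exp_add]; congr 1; ring
    have : 1 + L + M ε ≤ 14 * Real.exp (k / 2 / ε) := by linarith
    calc 2 * E * (1 + L + M ε) ≤ 2 * E * (14 * Real.exp (k / 2 / ε)) := by gcongr
      _ = 28 * (E * Real.exp (k / 2 / ε)) := by ring
      _ = _ := by rw [hEE]
  classical
  refine ⟨fun ε => if (∀ i, ∀ ξ ∈ V i, |φ ε ξ - lamE ε i| ≤ 28 * Real.exp (-(k / 2) / ε)) then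
    28 * Real.exp (-(k / 2) / ε) else 2 * M ε, ?_, ?_⟩
  · have ht : Tendsto (fun ε : ℝ => 28 * Real.exp (-(k / 2) / ε)) (𝓝[>] (0:ℝ)) (𝓝 0) := by
      have h1 : Tendsto (fun ε : ℝ => (k / 2) * ε⁻¹) (𝓝[>] (0:ℝ)) atTop :=
        tendsto_inv_nhdsGT_zero.const_mul_atTop (by positivity)
      have h2 := (Real.tendsto_exp_neg_atTop_nhds_zero.comp h1).const_mul 28
      rw [mul_zero] at h2
      refine h2.congr fun ε => ?_
      simp only [Function.comp]
      congr 2; ring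
    refine ht.congr' ?_
    filter_upwards [hgood] with ε hε
    rw [if_pos hε]
  · intro ε hε i ξ hξ
    have hp1 : 1 ≤ 1 + lamE ε i1 ^ (1 - 1/p) := by
      have := Real.rpow_nonneg (hlam0 ε hε) (1 - 1/p)
      linarith
    have hM0 : 0 ≤ M ε := (abs_nonneg _).trans (hM ε hε ξ)
    have key : |φ ε ξ - lamE ε i| ≤ if (∀ i, ∀ ξ ∈ V i, |φ ε ξ - lamE ε i| ≤ 28 * Real.exp (-(k / 2) / ε)) then
        28 * Real.exp (-(k / 2) / ε) else 2 * M ε := by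
      split_ifs with hg
      · exact hg i ξ hξ
      · rw [hlamE]
        refine avg_le (hVo i).measurableSet (hvol i) (hintV ε hε i) fun z hz => ?_
        have h1 := hM ε hε ξ
        have h2 := hM ε hε z
        rw [abs_le] at *
        constructor <;> linarith
    exact key.trans (le_mul_of_one_le_right ((abs_nonneg _).trans key) hp1)
end
end
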